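/- Let K be an algebraically closed field equipped with a surjective valuation v: K^* → ℚ, and assume K is complete with respect to the valuation topology. Let (ι, Γ, m) be a zero tension curve in ℚ^n of genus one (the first Betti number of Γ is 1) and degree δ, and assume that the slopes of the images ι(e_1), …, ι(e_r) of the edges of the unique circuit of Γ span ℚ^n. Then there exist q ∈ K^* with v(q) > 0 and finite multisets Z_1^+, Z_1^-, …, Z_n^+, Z_n^- of elements of K^* with |Z_i^+| = |Z_i^-| and ∏_{z ∈ Z_i^+} z = ∏_{z ∈ Z_i^-} z for each i, such that, setting φ_i(u) = ∏_{z ∈ Z_i^+} Θ_z(u) / ∏_{z ∈ Z_i^-} Θ_z(u), each φ_i satisfies φ_i(qu) = φ_i(u) on its domain (so φ = (φ_1, …, φ_n) defines a map from the Tate elliptic curve K^*/q^ℤ minus the images of the points of the Z_i^± to (K^*)^n), the set {(v(φ_1(u)), …, v(φ_n(u))) : u ∈ K^*, u ∉ q^ℤ·(⋃_i (Z_i^+ ∪ Z_i^-))} equals the image ι(Γ ∖ ∂Γ) ⊆ ℚ^n, and the multiset of order vectors of φ at the q^ℤ-orbits of the points of the Z_i^± (the i-th entry at the orbit of z being the total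 multiplicity of the orbit in Z_i^+ minus that in Z_i^-), grouped by primitive direction, equals δ. -/

import Mathlib

open scoped Classical

/-- A vector of `ℤ^n` is primitive: nonzero, and its coordinates have no common factor. -/
def IsPrimitiveVec {n : ℕ} (ρ : Fin n → ℤ) : Prop :=
  ρ ≠ 0 ∧ ∀ d : ℤ, (∀ i, d ∣ ρ i) → IsUnit d

/-- A combinatorial model of a *zero tension curve* `(ι, Γ, m)` in `ℚ^n`.
The interior vertices (the vertices of `Γ ∖ ∂Γ`) are `Fin V`, placed in `ℚ^n` by `pos`.
Bounded edges (both endpoints interior) are `Fin EB`; the edge `e` joins `bsrc e` to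
`bdst e`, has primitive direction `bdir e` (or `0` if it is contracted to a point),
length `blen e` and multiplicity `mB e`.  Unbounded edges (rays, with one endpoint a
degree-one boundary vertex of `Γ`) are `Fin ER`; the ray `e` is attached to the interior
vertex `rsrc e`, points in the primitive direction `rdir e` and has multiplicity `mR e`. -/
structure ZTC (n : ℕ) where
  V : ℕ
  EB : ℕ
  ER : ℕ
  pos : Fin V → Fin n → ℚ
  bsrc : Fin EB → Fin V
  bdst : Fin EB → Fin V
  bdir : Fin EB → Fin n → ℤ
  blen : Fin EB → ℚ
  mB : Fin EB → ℕ
  rsrc : Fin ER → Fin V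
  rdir : Fin ER → Fin n → ℤ
  mR : Fin ER → ℕ

namespace ZTC

variable {n : ℕ} (C : ZTC n)

/-- Validity of the data: multiplicities positive, directions primitive (with
`bdir e = 0` exactly for contracted edges), bounded edges join their endpoints, and the
zero tension condition holds at every interior vertex. -/
def Valid : Prop :=
  (∀ e, 0 < C.mB e) ∧ (∀ e, 0 < C.mR e) ∧
  (∀ e, IsPrimitiveVec (C.rdir e)) ∧
  (∀ e, (0 < C.blen e ∧ IsPrimitiveVec (C.bdir e)) ∨ (C.blen e = 0 ∧ C.bdir e = 0)) ∧
  (∀ e, (fun i => C.pos (C.bdst e) i - C.pos (C.bsrc e) i)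
      = fun i => C.blen e * (C.bdir e i : ℚ)) ∧
  (∀ u : Fin C.V,
    (∑ e : Fin C.EB, (C.mB e : ℤ) •
        ((if C.bsrc e = u then C.bdir e else 0) + (if C.bdst e = u then -C.bdir e else 0)))
      + (∑ e : Fin C.ER, if C.rsrc e = u then (C.mR e : ℤ) • C.rdir e else 0) = 0)

/-- Two interior vertices are adjacent if some bounded edge joins them. -/
def Adj (u w : Fin C.V) : Prop :=
  ∃ e, (C.bsrc e = u ∧ C.bdst e = w) ∨ (C.bsrc e = w ∧ C.bdst e = u)

/-- The graph `Γ` is connected. -/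
def Connected : Prop :=
  ∀ u w : Fin C.V, Relation.ReflTransGen C.Adj u w

/-- The image `ι(Γ ∖ ∂Γ) ⊆ ℚ^n`. -/
def ImageSet : Set (Fin n → ℚ) :=
  {x | (∃ u, x = C.pos u) ∨
    (∃ e, ∃ s : ℚ, 0 ≤ s ∧ s ≤ C.blen e ∧
      x = fun i => C.pos (C.bsrc e) i + s * (C.bdir e i : ℚ)) ∨
    (∃ e, ∃ s : ℚ, 0 ≤ s ∧
      x = fun i => C.pos (C.rsrc e) i + s * (C.rdir e i : ℚ))}

/-- A circuit of length `r ≥ 1` in `Γ`: cyclically indexed distinct vertices `c k` and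
distinct edges `ce k`, the edge `ce k` joining `c k` to `c (k+1)`. -/
def IsCircuit (r : ℕ) (c : ZMod r → Fin C.V) (ce : ZMod r → Fin C.EB) : Prop :=
  r ≠ 0 ∧ Function.Injective c ∧ Function.Injective ce ∧
  ∀ k : ZMod r, (C.bsrc (ce k) = c k ∧ C.bdst (ce k) = c (k + 1)) ∨
    (C.bsrc (ce k) = c (k + 1) ∧ C.bdst (ce k) = c k)

end ZTC

/-- Convergence of a sequence in the valuation topology: `x_m → L` iff
`v (x_m - L) → ∞`. -/
def VTendsto {K : Type*} [Field K] (v : K → WithTop ℚ) (x : ℕ → K) (L : K) : Prop :=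
  ∀ M : ℚ, ∃ N : ℕ, ∀ m ≥ N, (M : WithTop ℚ) ≤ v (x m - L)

/-- The elliptic function `φ_{Z⁺,Z⁻}(u) = ∏_{z ∈ Z⁺} Θ_z(u) / ∏_{z ∈ Z⁻} Θ_z(u)` built
from a theta function `Θ`. -/
noncomputable def phiVal {K : Type*} [Field K] (Θ : K → K → K) (Zp Zm : Multiset K)
    (u : K) : K :=
  ((Zp.map fun z => Θ z u).prod) / ((Zm.map fun z => Θ z u).prod)

/-- The domain of the elliptic map: `u ∈ K^*` away from the `q^ℤ`-orbits of all the
points of the multisets `Z_i^±`. -/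
def TateDom {K : Type*} [Field K] {n : ℕ} (q : K) (Zp Zm : Fin n → Multiset K)
    (u : K) : Prop :=
  u ≠ 0 ∧ ∀ (j : ℤ) (i : Fin n), (∀ z ∈ Zp i, u ≠ q ^ j * z) ∧ (∀ z ∈ Zm i, u ≠ q ^ j * z)

/-- The order vector of `φ` at the `q^ℤ`-orbit of `x`: its `i`-th entry is the total
multiplicity of the orbit of `x` in `Z_i^+` minus that in `Z_i^-`. -/
noncomputable def orbVec {K : Type*} [Field K] {n : ℕ} (q : K)
    (Zp Zm : Fin n → Multiset K) (x : K) : Fin n → ℤ :=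
  fun i => ((Zp i).countP (fun z => ∃ j : ℤ, z = q ^ j * x) : ℤ)
    - ((Zm i).countP (fun z => ∃ j : ℤ, z = q ^ j * x) : ℤ)

/-!
The abstract graph of a genus one curve is a circuit with trees attached. It is rooted at a circuit
vertex and described by a parent map (`Unicyclic`), where parents go round the circuit. Cutting the
circuit at the root unrolls the graph to a metric tree, in which the root has depth `0` and its
second copy has depth equal to the length of the circuit. This length is taken to be `v q`.

Such a tree embeds in `K` as a tree of balls: every node `x` gets a centre `a x`, with the circuit
centred at `0`, and `v (a x - a y)` is the depth at which the paths to `x` and `y` part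
(`exists_centers`). The centres `z e` at the ends of the rays `e` are the zeros and poles. Write
`out e` for the outward direction of `e` times its multiplicity, and `s` for the slope of the edge
closing the circuit. Then the `i`-th coordinate of the lift is
`c_i u ^ (s i) ∏ Θ_{z e}(u) ^ (out e i)`, where `v c_i` is fixed by the position of the root. The
monomial and the constant are themselves written as theta quotients, whose zeros and poles cancel
orbit by orbit (`zeros`, `poles`).

Periodicity under `u ↦ q u` requires `∑ out e = 0`, which follows from the zero tension condition,
and `∏ z e ^ (out e i) = q ^ (- s i)`. The valuations of the two sides of the latter agree because the
circuit closes up (`sum_depth_anchor`). Multiplying all centres in the branch at a circuit vertex by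
a unit changes no distance within the tree, and changes the left side by monomials in these units;
since the slopes of the circuit span `ℚ^n`, the exponents have rank `n` (`branchDeg_span`), and since
`K` is algebraically closed the units can be chosen so as to obtain equality.

For `0 ≤ v u < v q` the valuation of a coordinate is the root position plus
`s i * v u + ∑ out e i * v (u - z e)`. Summing by parts over the tree (`sum_nodes`, `tree_sum`) this
becomes the `i`-th coordinate of the point of the curve at which the path to `u` leaves the tree of
balls. Hence all values lie on the curve; conversely every point of the curve is attained, by a
generic `u` in the ball with the appropriate centre and radius.
-/

/-! ### Rooting a genus one curve at its circuit -/

/-- A zero tension curve whose graph is a circuit with trees attached, presented by a parent map: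
every bounded edge is the edge from `par w` to `w` for exactly one vertex `w`, and `par` goes round
the circuit. Multiplicities are absorbed in the slopes and lengths: `slope w` is the multiplicity
times the primitive direction of the edge from `par w` to `w`, and `len w` is its lattice length
divided by the multiplicity. A contracted edge has slope `0` and an arbitrary positive length, so
that no edge of the abstract graph is degenerate. The rays are indexed by `E`; the ray `e` starts at
`src e` and has direction times multiplicity `out e`. -/
structure Unicyclic (V E : Type) [Fintype V] [Fintype E] (n : ℕ) where
  par : V → V
  root : V
  circ : V → Prop
  /-- Ensures that iterating `par` reaches `root`, where the unrolled circuit is cut. -/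
  rank : V → ℕ
  len : V → ℚ
  slope : V → Fin n → ℤ
  pos : V → Fin n → ℚ
  src : E → V
  out : E → Fin n → ℤ
  circ_root : circ root
  circ_par : ∀ w, circ w → circ (par w)
  circ_inj : ∀ w w', circ w → circ w' → par w = par w' → w = w'
  rank_lt : ∀ w, w ≠ root → rank (par w) < rank w
  len_pos : ∀ w, 0 < len w
  pos_sub : ∀ w i, pos w i - pos (par w) i = len w * (slope w i : ℚ)
  tension : ∀ u i, (∑ w with par w = u, slope w i) - slope u i + ∑ e with src e = u, out e i = 0
  /-- The slopes on the circuit span `ℚ^n`, in dual form. -/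
  span : ∀ l : Fin n → ℚ, (∀ w, circ w → ∑ i, l i * (slope w i : ℚ) = 0) → l = 0

namespace Unicyclic

/-- The image of the curve in `ℚ^n`: the union of its edges and rays. -/
def Image {V E : Type} [Fintype V] [Fintype E] {n : ℕ} (D : Unicyclic V E n) :
    Set (Fin n → ℚ) :=
  {x | (∃ w, ∃ t : ℚ, 0 ≤ t ∧ t ≤ D.len w ∧
      ∀ i, x i = D.pos (D.par w) i + t * (D.slope w i : ℚ)) ∨
    (∃ e, ∃ t : ℚ, 0 ≤ t ∧ ∀ i, x i = D.pos (D.src e) i + t * (D.out e i : ℚ))}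

end Unicyclic

namespace ZTC

variable {n : ℕ} (C : ZTC n)

/-- The bounded edge `e` has endpoints `u` and `w`. -/
def Joins (e : Fin C.EB) (u w : Fin C.V) : Prop :=
  (C.bsrc e = u ∧ C.bdst e = w) ∨ (C.bsrc e = w ∧ C.bdst e = u)

/-- `Reach c m w`: some walk with `m` edges leads from the vertices `c` to `w`. -/
def Reach {r : ℕ} (c : ZMod r → Fin C.V) : ℕ → Fin C.V → Prop
  | 0, w => ∃ k, c k = w
  | m + 1, w => ∃ y, Reach c m y ∧ C.Adj y w

/-- In a connected graph with as many edges as vertices, every edge is the parent edge of exactly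
one vertex: on the circuit the parent is the predecessor, off the circuit it is a neighbour closer
to the circuit. Parent edges are distinct, so by counting they exhaust all edges. -/
lemma exists_parent (hconn : C.Connected) (hgenus : C.V = C.EB) {r : ℕ} {c : ZMod r → Fin C.V}
    {ce : ZMod r → Fin C.EB} (hC : C.IsCircuit r c ce) :
    ∃ (par : Fin C.V → Fin C.V) (pe : Fin C.V → Fin C.EB) (rank : Fin C.V → ℕ),
      Function.Bijective pe ∧ (∀ w, C.Joins (pe w) (par w) w) ∧
      (∀ k, par (c (k + 1)) = c k ∧ pe (c (k + 1)) = ce k) ∧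
      (∀ w, w ≠ c 0 → rank (par w) < rank w) := by
  obtain ⟨hr, hc, hce, hj⟩ := hC
  have : NeZero r := ⟨hr⟩
  set reach := C.Reach c with hreach_def
  have hreach : ∀ w, ∃ m, reach m w := by
    intro w
    have := hconn (c 0) w
    induction this with
    | refl => exact ⟨0, 0, rfl⟩
    | tail _ hbc ih =>
      obtain ⟨m, hm⟩ := ih
      exact ⟨m + 1, _, hm, hbc⟩
  let dist : Fin C.V → ℕ := fun w => Nat.find (p := fun m : ℕ => reach m w) (hreach w)
  have hstep : ∀ w, ∃ p e, C.Joins e p w ∧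
      ((∃ k, w = c (k + 1) ∧ p = c k ∧ e = ce k) ∨ ((∀ k, c k ≠ w) ∧ dist p < dist w)) := by
    intro w
    by_cases h : ∃ k, c k = w
    · obtain ⟨k, rfl⟩ := h
      refine ⟨c (k - 1), ce (k - 1), ?_, Or.inl ⟨k - 1, by simp, rfl, rfl⟩⟩
      have := hj (k - 1)
      rw [sub_add_cancel] at this
      exact this
    · push Not at h
      have hs : reach (dist w) w := Nat.find_spec (p := fun m : ℕ => reach m w) (hreach w)
      rcases hd : dist w with _ | m
      · rw [hd] at hs
        obtain ⟨k, hk⟩ := hs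
        exact absurd hk (h k)
      · rw [hd] at hs
        obtain ⟨y, hy, e, he⟩ := hs
        refine ⟨y, e, he, Or.inr ⟨h, ?_⟩⟩
        exact Nat.lt_succ_of_le (Nat.find_min' (p := fun m : ℕ => reach m y) (hreach y) hy)
  choose par pe hjoin halt using hstep
  have hcirc : ∀ k, par (c (k + 1)) = c k ∧ pe (c (k + 1)) = ce k := by
    intro k
    rcases halt (c (k + 1)) with ⟨k', h1, h2, h3⟩ | ⟨h, _⟩
    · have : k' = k := by simpa using (hc h1).symm
      subst this; exact ⟨h2, h3⟩
    · exact absurd rfl (h (k + 1))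
  -- Circuit vertices are ranked by their index, the others by `r` plus the distance to the circuit.
  let rank : Fin C.V → ℕ := fun w =>
    if h : ∃ k, c k = w then (Classical.choose h).val else r + dist w
  have hrankc : ∀ k, rank (c k) = k.val := by
    intro k
    have h : ∃ k', c k' = c k := ⟨k, rfl⟩
    simp only [rank, dif_pos h]
    rw [hc (Classical.choose_spec h)]
  have hrankn : ∀ w, (∀ k, c k ≠ w) → rank w = r + dist w := by
    intro w h
    simp only [rank]
    rw [dif_neg (by push Not; exact h)]
  have hinj : Function.Injective pe := by
    intro w w' hww
    by_contra hne
    rcases halt w with ⟨k, h1, h2, h3⟩ | ⟨h, hd⟩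
    · rcases halt w' with ⟨k', h1', h2', h3'⟩ | ⟨h', hd'⟩
      · have : k = k' := hce (by rw [← h3, ← h3', hww])
        subst this
        exact hne (h1.trans h1'.symm)
      · have hjw := hjoin w
        have hjw' := hjoin w'
        rw [hww] at hjw
        rcases hjw with ⟨a, b⟩ | ⟨a, b⟩ <;> rcases hjw' with ⟨a', b'⟩ | ⟨a', b'⟩
        · exact hne (b.symm.trans b')
        · exact h' k (by rw [← h2, ← a', a])
        · exact h' k (by rw [← h2, ← b', b])
        · exact hne (a.symm.trans a')
    · have hjw := hjoin w
      have hjw' := hjoin w'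
      rw [hww] at hjw
      have key : par w = w' ∧ par w' = w := by
        rcases hjw with ⟨a, b⟩ | ⟨a, b⟩ <;> rcases hjw' with ⟨a', b'⟩ | ⟨a', b'⟩
        · exact absurd (b.symm.trans b') hne
        · exact ⟨a.symm.trans a', b'.symm.trans b⟩
        · exact ⟨b.symm.trans b', a'.symm.trans a⟩
        · exact absurd (a.symm.trans a') hne
      rcases halt w' with ⟨k', h1', h2', h3'⟩ | ⟨h', hd'⟩
      · exact h k' (by rw [← h2', key.2])
      · rw [key.1] at hd; rw [key.2] at hd'; omega
  refine ⟨par, pe, rank, ?_, hjoin, hcirc, ?_⟩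
  · rw [Fintype.bijective_iff_injective_and_card]
    exact ⟨hinj, by simpa using hgenus⟩
  · intro w hw
    rcases halt w with ⟨k, h1, h2, h3⟩ | ⟨h, hd⟩
    · rw [h2, h1, hrankc, hrankc]
      have hk : k + 1 ≠ 0 := by
        intro h0; rw [h0] at h1; exact hw h1
      have hk' : k.val + 1 < r := by
        have := ZMod.val_lt k
        rcases Nat.lt_or_ge (k.val + 1) r with h | h
        · exact h
        · exfalso
          apply hk
          have : k.val + 1 = r := by omega
          have h2 : ((k.val + 1 : ℕ) : ZMod r) = 0 := by rw [this]; simp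
          simpa using h2
      have : (k + 1).val = k.val + 1 := by
        have h2 : ((k.val + 1 : ℕ) : ZMod r) = k + 1 := by simp
        rw [← h2, ZMod.val_natCast, Nat.mod_eq_of_lt hk']
      omega
    · rw [hrankn w h]
      by_cases hp : ∃ k, c k = par w
      · obtain ⟨k, hk⟩ := hp
        rw [← hk, hrankc]
        have := ZMod.val_lt k
        omega
      · push Not at hp
        rw [hrankn _ hp]
        omega

/-- Every zero tension curve of genus one with spanning circuit slopes is unicyclic, with the same
rays and the same image. -/
lemma exists_unicyclic (hval : C.Valid) (hconn : C.Connected) (hgenus : C.V = C.EB)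
    (hordinary : ∃ (r : ℕ) (c : ZMod r → Fin C.V) (ce : ZMod r → Fin C.EB),
      C.IsCircuit r c ce ∧
      Submodule.span ℚ
        {x : Fin n → ℚ | ∃ k : ZMod r, x = fun i => (C.bdir (ce k) i : ℚ)} = ⊤) :
    ∃ D : Unicyclic (Fin C.V) (Fin C.ER) n,
      (∀ e i, D.out e i = C.mR e * C.rdir e i) ∧ D.Image = C.ImageSet := by
  obtain ⟨r, c, ce, hC, hspan⟩ := hordinary
  obtain ⟨par, pe, rank, hpe, hjoin, hcirc, hrank⟩ := C.exists_parent hconn hgenus hC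
  obtain ⟨hmB, hmR, hrd, hbd, hedge, htens⟩ := hval
  -- `sgn w` records whether the edge `pe w` of `C` is oriented towards `w`; on a loop both
  -- descriptions hold and `1` is chosen.
  let sgn : Fin C.V → ℤ := fun w => if C.bdst (pe w) = w ∧ C.bsrc (pe w) = par w then 1 else -1
  let slope : Fin C.V → Fin n → ℤ := fun w i => sgn w * (C.mB (pe w) * C.bdir (pe w) i)
  let len : Fin C.V → ℚ := fun w =>
    if C.bdir (pe w) = 0 then 1 else C.blen (pe w) / C.mB (pe w)
  have hsgn : ∀ w, (sgn w = 1 ∧ C.bdst (pe w) = w ∧ C.bsrc (pe w) = par w) ∨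
      (sgn w = -1 ∧ C.bsrc (pe w) = w ∧ C.bdst (pe w) = par w) := by
    intro w
    by_cases h : C.bdst (pe w) = w ∧ C.bsrc (pe w) = par w
    · left; exact ⟨if_pos h, h⟩
    · right
      refine ⟨if_neg h, ?_⟩
      rcases hjoin w with ⟨a, b⟩ | h'
      · exact absurd ⟨b, a⟩ h
      · exact h'
  have hmB' : ∀ w, (C.mB w : ℚ) ≠ 0 := fun w => by exact_mod_cast (hmB w).ne'
  have hlen : ∀ w, 0 < len w := by
    intro w
    simp only [len]
    split_ifs with h
    · exact one_pos
    · rcases hbd (pe w) with ⟨h1, _⟩ | ⟨_, h2⟩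
      · exact div_pos h1 (by exact_mod_cast hmB _)
      · exact absurd h2 h
  have hls : ∀ w i, len w * (slope w i : ℚ) = sgn w * (C.blen (pe w) * C.bdir (pe w) i) := by
    intro w i
    simp only [len, slope]
    split_ifs with h
    · simp [h]
    · push_cast
      have := hmB' (pe w)
      field_simp
  have hpos : ∀ w i, C.pos w i - C.pos (par w) i = len w * (slope w i : ℚ) := by
    intro w i
    rw [hls]
    have : C.pos (C.bdst (pe w)) i - C.pos (C.bsrc (pe w)) i = C.blen (pe w) * C.bdir (pe w) i :=
      congrFun (hedge (pe w)) i
    rcases hsgn w with ⟨h1, h2, h3⟩ | ⟨h1, h2, h3⟩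
    · rw [h1, ← this, h2, h3]; simp
    · rw [h1, ← this, h2, h3]; push_cast; ring
  refine ⟨⟨par, c 0, fun w => ∃ k, c k = w, rank, len, slope, C.pos, C.rsrc,
    fun e i => C.mR e * C.rdir e i, ⟨0, rfl⟩, ?_, ?_, hrank, hlen, hpos, ?_, ?_⟩,
    fun _ _ => rfl, ?_⟩
  · rintro _ ⟨k, rfl⟩
    refine ⟨k - 1, ?_⟩
    have := (hcirc (k - 1)).1
    rw [sub_add_cancel] at this
    exact this.symm
  · rintro _ _ ⟨k, rfl⟩ ⟨k', rfl⟩ h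
    have h1 := (hcirc (k - 1)).1
    have h2 := (hcirc (k' - 1)).1
    rw [sub_add_cancel] at h1 h2
    rw [h1, h2] at h
    have := hC.2.1 h
    rw [sub_left_inj.mp this]
  · intro u i
    have h := congrFun (htens u) i
    simp only [Pi.add_apply, Finset.sum_apply, Pi.zero_apply] at h
    rw [← h]
    congr 1
    · rw [← Function.Bijective.sum_comp hpe, Finset.sum_filter]
      have : slope u i = ∑ w, if w = u then slope w i else 0 := by simp
      rw [this, ← Finset.sum_sub_distrib]
      refine Finset.sum_congr rfl fun w _ => ?_
      rcases hsgn w with ⟨h1, h2, h3⟩ | ⟨h1, h2, h3⟩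
      · simp only [slope, h1, h2, h3]
        split_ifs <;> simp
      · simp only [slope, h1, h2, h3]
        split_ifs <;> simp
    · rw [Finset.sum_filter]
      refine Finset.sum_congr rfl fun e _ => ?_
      split_ifs <;> simp
  · intro l hl
    have hk : ∀ k : ZMod r, ∑ i, l i * (C.bdir (ce k) i : ℚ) = 0 := by
      intro k
      have h1 := hl (c (k + 1)) ⟨_, rfl⟩
      have h2 : ∀ i, l i * (slope (c (k + 1)) i : ℚ)
          = (sgn (c (k + 1)) * C.mB (ce k) : ℚ) * (l i * (C.bdir (ce k) i : ℚ)) := by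
        intro i
        simp only [slope, (hcirc k).2]
        push_cast; ring
      simp only [h2, ← Finset.mul_sum] at h1
      rcases mul_eq_zero.mp h1 with h | h
      · exfalso
        rcases mul_eq_zero.mp h with h | h
        · rcases hsgn (c (k + 1)) with ⟨h', _⟩ | ⟨h', _⟩ <;> rw [h'] at h <;> norm_num at h
        · exact hmB' _ h
      · exact h
    have hle : Submodule.span ℚ
        {x : Fin n → ℚ | ∃ k : ZMod r, x = fun i => (C.bdir (ce k) i : ℚ)} ≤
        LinearMap.ker (∑ i, l i • (LinearMap.proj i : (Fin n → ℚ) →ₗ[ℚ] ℚ)) := by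
      rw [Submodule.span_le]
      rintro _ ⟨k, rfl⟩
      simpa using hk k
    rw [hspan] at hle
    have := hle (Submodule.mem_top (x := l))
    simp only [LinearMap.mem_ker, LinearMap.sum_apply, LinearMap.smul_apply,
      LinearMap.proj_apply, smul_eq_mul] at this
    funext i
    have := (Finset.sum_eq_zero_iff_of_nonneg (fun i _ => mul_self_nonneg (l i))).mp this i
      (Finset.mem_univ i)
    simpa using this
  · ext x
    simp only [Unicyclic.Image, ZTC.ImageSet, Set.mem_ofPred_eq]
    constructor
    · rintro (⟨w, t, h0, h1, h⟩ | ⟨e, t, h0, h⟩)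
      · by_cases hz : C.bdir (pe w) = 0
        · left
          refine ⟨par w, funext fun i => ?_⟩
          rw [h i]
          simp [slope, hz]
        · right; left
          have hm : (0 : ℚ) < C.mB (pe w) := by exact_mod_cast hmB _
          have hlw : len w = C.blen (pe w) / C.mB (pe w) := if_neg hz
          rw [hlw, le_div_iff₀ hm] at h1
          rcases hsgn w with ⟨h1', h2, h3⟩ | ⟨h1', h2, h3⟩
          · refine ⟨pe w, t * C.mB (pe w), by positivity, h1, funext fun i => ?_⟩
            rw [h i, h3]
            simp only [slope, h1']
            push_cast; ring
          · refine ⟨pe w, C.blen (pe w) - t * C.mB (pe w), by linarith,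
              by have : 0 ≤ t * C.mB (pe w) := by positivity
                 linarith, funext fun i => ?_⟩
            have he := congrFun (hedge (pe w)) i
            simp only [h2, h3] at he
            rw [h i, h2]
            simp only [slope, h1']
            push_cast
            linear_combination he
      · right; right
        refine ⟨e, t * C.mR e, by positivity, funext fun i => ?_⟩
        rw [h i]; push_cast; ring
    · rintro (⟨u, rfl⟩ | ⟨e, s, h0, h1, rfl⟩ | ⟨e, s, h0, rfl⟩)
      · left
        refine ⟨u, len u, (hlen u).le, le_rfl, fun i => ?_⟩
        have := hpos u i
        linarith
      · obtain ⟨w, rfl⟩ := hpe.2 e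
        left
        by_cases hz : C.bdir (pe w) = 0
        · refine ⟨w, 0, le_rfl, (hlen w).le, fun i => ?_⟩
          have he := hpos w i
          rcases hsgn w with ⟨h1', h2, h3⟩ | ⟨h1', h2, h3⟩
          · simp [h3, hz]
          · simp only [slope, hz] at he
            simp [h2, hz]
            simp at he
            linarith
        · have hm : (0 : ℚ) < C.mB (pe w) := by exact_mod_cast hmB _
          have hlw : len w = C.blen (pe w) / C.mB (pe w) := if_neg hz
          rcases hsgn w with ⟨h1', h2, h3⟩ | ⟨h1', h2, h3⟩
          · refine ⟨w, s / C.mB (pe w), by positivity, ?_, fun i => ?_⟩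
            · rw [hlw]; gcongr
            · simp only [slope, h1', h3]
              push_cast
              field_simp
          · refine ⟨w, (C.blen (pe w) - s) / C.mB (pe w), ?_, ?_, fun i => ?_⟩
            · apply div_nonneg _ hm.le; linarith
            · rw [hlw]; gcongr; linarith
            · have he := congrFun (hedge (pe w)) i
              simp only [h2, h3] at he
              simp only [slope, h1', h2]
              push_cast
              field_simp
              linear_combination -he
      · right
        refine ⟨e, s / C.mR e, by positivity, fun i => ?_⟩
        have : (C.mR e : ℚ) ≠ 0 := by exact_mod_cast (hmR e).ne'
        push_cast
        field_simp

end ZTC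

/-! ### The valuation and the Tate theta function -/

section Valuation

variable {K : Type*} [Field K] (v : AddValuation K (WithTop ℚ))

/-- The valuation as a rational number, with the junk value `0` at `0`. -/
noncomputable def ratVal (x : K) : ℚ := (v x).untopD 0

lemma coe_ratVal {x : K} (hx : x ≠ 0) : (ratVal v x : WithTop ℚ) = v x := by
  have h : v x ≠ ⊤ := fun h => hx (v.top_iff.mp h)
  lift v x to ℚ using h with a ha
  simp [ratVal, ← ha]

lemma ratVal_eq {x : K} {a : ℚ} (h : v x = a) : ratVal v x = a := by simp [ratVal, h]

lemma ne_zero_of_val {x : K} {a : ℚ} (h : v x = a) : x ≠ 0 := by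
  rintro rfl; simp at h

lemma ratVal_mul {x y : K} (hx : x ≠ 0) (hy : y ≠ 0) :
    ratVal v (x * y) = ratVal v x + ratVal v y := by
  apply ratVal_eq
  rw [v.map_mul, ← coe_ratVal v hx, ← coe_ratVal v hy, WithTop.coe_add]

lemma ratVal_one : ratVal v 1 = 0 := ratVal_eq v (by simp)

lemma ratVal_neg (x : K) : ratVal v (-x) = ratVal v x := by simp [ratVal]

lemma ratVal_inv {x : K} (hx : x ≠ 0) : ratVal v x⁻¹ = -ratVal v x := by
  have := ratVal_mul v hx (inv_ne_zero hx)
  rw [mul_inv_cancel₀ hx, ratVal_one] at this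
  linarith

lemma ratVal_div {x y : K} (hx : x ≠ 0) (hy : y ≠ 0) :
    ratVal v (x / y) = ratVal v x - ratVal v y := by
  rw [div_eq_mul_inv, ratVal_mul v hx (inv_ne_zero hy), ratVal_inv v hy, sub_eq_add_neg]

lemma ratVal_pow {x : K} (hx : x ≠ 0) (m : ℕ) : ratVal v (x ^ m) = m * ratVal v x := by
  induction m with
  | zero => simp [ratVal_one]
  | succ m ih => rw [pow_succ, ratVal_mul v (pow_ne_zero _ hx) hx, ih]; push_cast; ring

lemma ratVal_zpow {x : K} (hx : x ≠ 0) (m : ℤ) : ratVal v (x ^ m) = m * ratVal v x := by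
  cases m with
  | ofNat m => simpa using ratVal_pow v hx m
  | negSucc m =>
    rw [zpow_negSucc, ratVal_inv v (pow_ne_zero _ hx), ratVal_pow v hx]
    push_cast; ring

lemma ratVal_prod {ι : Type*} (s : Finset ι) (f : ι → K) (hf : ∀ i ∈ s, f i ≠ 0) :
    ratVal v (∏ i ∈ s, f i) = ∑ i ∈ s, ratVal v (f i) := by
  induction s using Finset.induction_on with
  | empty => simp [ratVal_one]
  | insert a s ha ih =>
    have h2 : ∀ i ∈ s, f i ≠ 0 := fun i hi => hf i (Finset.mem_insert_of_mem hi)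
    rw [Finset.prod_insert ha, Finset.sum_insert ha, ← ih h2,
      ratVal_mul v (hf a (Finset.mem_insert_self a s)) (Finset.prod_ne_zero_iff.mpr h2)]

lemma val_one_sub {y : K} (hy : 0 < v y) : v (1 - y) = 0 := by
  rw [sub_eq_add_neg, v.map_add_eq_of_lt_left] <;> simp [hy]

variable {v}

lemma VTendsto.unique {x : ℕ → K} {L L' : K} (h : VTendsto v x L) (h' : VTendsto v x L') :
    L = L' := by
  by_contra hne
  have h0 := sub_ne_zero.mpr hne
  obtain ⟨N, hN⟩ := h (ratVal v (L - L') + 1)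
  obtain ⟨N', hN'⟩ := h' (ratVal v (L - L') + 1)
  have h1 := hN (max N N') (le_max_left _ _)
  have h2 := hN' (max N N') (le_max_right _ _)
  rw [v.map_sub_swap] at h1
  have h3 := v.map_le_add h1 h2
  rw [sub_add_sub_cancel, ← coe_ratVal v h0, WithTop.coe_le_coe] at h3
  linarith

/-- A valuation is locally constant away from `0`. -/
lemma VTendsto.val_eq {x : ℕ → K} {L : K} (h : VTendsto v x L) {c : ℚ} {N : ℕ}
    (hc : ∀ m ≥ N, v (x m) = c) : v L = c := by
  obtain ⟨N', hN'⟩ := h (c + 1)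
  have h1 := hN' (max N N') (le_max_right _ _)
  have h2 := hc (max N N') (le_max_left _ _)
  have h3 : v (x (max N N')) < v (-(x (max N N') - L)) := by
    rw [h2, v.map_neg]
    refine lt_of_lt_of_le ?_ h1
    exact_mod_cast lt_add_one c
  have := v.map_add_eq_of_lt_left h3
  rw [← h2, ← this]
  congr 1; ring

lemma VTendsto.mul {x y : ℕ → K} {L M : K} (hx : VTendsto v x L) (hy : VTendsto v y M) :
    VTendsto v (fun m => x m * y m) (L * M) := by
  intro B
  have hbd : ∀ z : K, ∃ C : ℚ, 0 ≤ C ∧ ((-C : ℚ) : WithTop ℚ) ≤ v z := by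
    intro z
    by_cases hz : z = 0
    · exact ⟨0, le_rfl, by simp [hz]⟩
    · refine ⟨|ratVal v z|, abs_nonneg _, ?_⟩
      rw [← coe_ratVal v hz, WithTop.coe_le_coe]
      exact neg_abs_le _
  obtain ⟨C, hC0, hC⟩ := hbd L
  obtain ⟨C', hC0', hC'⟩ := hbd M
  obtain ⟨N, hN⟩ := hx (|B| + C + C')
  obtain ⟨N', hN'⟩ := hy (|B| + C + C')
  refine ⟨max N N', fun m hm => ?_⟩
  have h1 := hN m (le_trans (le_max_left _ _) hm)
  have h2 := hN' m (le_trans (le_max_right _ _) hm)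
  have habs := le_abs_self B
  have habs' := abs_nonneg B
  have e : x m * y m - L * M = (x m - L) * (y m - M) + L * (y m - M) + (x m - L) * M := by ring
  rw [e]
  refine v.map_le_add (v.map_le_add ?_ ?_) ?_ <;> rw [v.map_mul]
  · refine le_trans ?_ (add_le_add h1 h2)
    rw [← WithTop.coe_add, WithTop.coe_le_coe]; linarith
  · refine le_trans ?_ (add_le_add hC h2)
    rw [← WithTop.coe_add, WithTop.coe_le_coe]; linarith
  · refine le_trans ?_ (add_le_add h1 hC')
    rw [← WithTop.coe_add, WithTop.coe_le_coe]; linarith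

lemma VTendsto.const (L : K) : VTendsto v (fun _ => L) L := fun M => ⟨0, by simp⟩

lemma vtendsto_one_sub {a : ℕ → K} (h : VTendsto v a 0) :
    VTendsto v (fun m => 1 - a m) 1 := by
  intro M
  obtain ⟨N, hN⟩ := h M
  refine ⟨N, fun m hm => ?_⟩
  have := hN m hm
  rw [sub_zero] at this
  rwa [sub_sub_cancel_left, v.map_neg]

lemma vtendsto_geom {q x : K} (hq : q ≠ 0) (hqv : 0 < ratVal v q) (hx : x ≠ 0) :
    VTendsto v (fun m => q ^ m * x) 0 := by
  intro M
  obtain ⟨N, hN⟩ := exists_nat_ge ((M - ratVal v x) / ratVal v q)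
  refine ⟨N, fun m hm => ?_⟩
  rw [sub_zero, ← coe_ratVal v (mul_ne_zero (pow_ne_zero _ hq) hx), WithTop.coe_le_coe,
    ratVal_mul v (pow_ne_zero _ hq) hx, ratVal_pow v hq]
  rw [div_le_iff₀ hqv] at hN
  have : (N : ℚ) ≤ m := by exact_mod_cast hm
  nlinarith

/-- In a complete nonarchimedean field, `x (m + 1) - x m → 0` suffices for convergence. -/
lemma exists_limit
    (hcomplete : ∀ x : ℕ → K,
      (∀ M : ℚ, ∃ N : ℕ, ∀ m₁ ≥ N, ∀ m₂ ≥ N, (M : WithTop ℚ) ≤ v (x m₁ - x m₂)) →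
      ∃ L : K, VTendsto v x L) {x : ℕ → K}
    (h : ∀ M : ℚ, ∃ N, ∀ m ≥ N, (M : WithTop ℚ) ≤ v (x (m + 1) - x m)) :
    ∃ L, VTendsto v x L := by
  apply hcomplete
  intro M
  obtain ⟨N, hN⟩ := h M
  have key : ∀ m ≥ N, (M : WithTop ℚ) ≤ v (x m - x N) := by
    intro m hm
    induction m, hm using Nat.le_induction with
    | base => simp
    | succ m hm ih =>
      have := v.map_le_add (hN m hm) ih
      rwa [sub_add_sub_cancel] at this
  refine ⟨N, fun m₁ h₁ m₂ h₂ => ?_⟩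
  have h3 := key m₂ h₂
  rw [v.map_sub_swap] at h3
  have := v.map_le_add (key m₁ h₁) h3
  rwa [sub_add_sub_cancel] at this

/-- Partial products of the theta function `Θ₁` with zeros `q^ℤ`; in general `Θ_z(u) = Θ₁(u / z)`. -/
def thetaPart (q x : K) (m : ℕ) : K :=
  (∏ j ∈ Finset.range m, (1 - q ^ j * x)) * ∏ j ∈ Finset.range m, (1 - q ^ (j + 1) * x⁻¹)

lemma thetaPart_succ (q x : K) (m : ℕ) :
    thetaPart q x (m + 1) = thetaPart q x m * ((1 - q ^ m * x) * (1 - q ^ (m + 1) * x⁻¹)) := by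
  simp only [thetaPart, Finset.prod_range_succ]; ring

lemma thetaPart_ne_zero {q x : K} (hq : q ≠ 0) (hx : x ≠ 0) (h : ∀ j : ℤ, x ≠ q ^ j) (m : ℕ) :
    thetaPart q x m ≠ 0 := by
  refine mul_ne_zero (Finset.prod_ne_zero_iff.mpr fun j _ h0 => ?_)
    (Finset.prod_ne_zero_iff.mpr fun j _ h0 => ?_)
  · apply h (-(j : ℤ))
    have hj : q ^ j ≠ 0 := pow_ne_zero _ hq
    rw [zpow_neg, zpow_natCast]
    field_simp
    linear_combination -h0
  · apply h ((j + 1 : ℕ) : ℤ)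
    rw [zpow_natCast]
    field_simp at h0
    linear_combination h0

/-- The functional equation `Θ₁(q x) = -x⁻¹ Θ₁(x)` at the level of partial products. -/
lemma thetaPart_shift (q : K) {x : K} (hq : q ≠ 0) (hx : x ≠ 0) (m : ℕ) :
    thetaPart q (q * x) m * ((1 - x) * (1 - q ^ m * x⁻¹)) =
      thetaPart q x m * ((1 - q ^ m * x) * (1 - x⁻¹)) := by
  induction m with
  | zero => simp [thetaPart]
  | succ m ih =>
    rw [thetaPart_succ, thetaPart_succ]
    have e1 : q ^ (m + 1) * (q * x)⁻¹ = q ^ m * x⁻¹ := by field_simp; ring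
    rw [e1]
    linear_combination (1 - q ^ m * (q * x)) * (1 - q ^ (m + 1) * x⁻¹) * ih

lemma val_thetaPart_mul {a b : K} (ha : 0 < v a) (hb : 0 < v b) :
    v ((1 - a) * (1 - b)) = 0 := by
  rw [v.map_mul, val_one_sub v ha, val_one_sub v hb, add_zero]

/-- Off `q^ℤ` the theta products converge to a nonzero limit, which satisfies the functional equation
and whose valuation is that of the factor `1 - x` in the range `|v x| < v q`, where all other factors
are units. -/
lemma exists_theta
    (hcomplete : ∀ x : ℕ → K,
      (∀ M : ℚ, ∃ N : ℕ, ∀ m₁ ≥ N, ∀ m₂ ≥ N, (M : WithTop ℚ) ≤ v (x m₁ - x m₂)) →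
      ∃ L : K, VTendsto v x L) {q : K} (hq : q ≠ 0) (hqv : 0 < ratVal v q) :
    ∃ θ : K → K, ∀ x, x ≠ 0 → (∀ j : ℤ, x ≠ q ^ j) →
      θ x ≠ 0 ∧ VTendsto v (thetaPart q x) (θ x) ∧ θ (q * x) = -x⁻¹ * θ x ∧
      (-ratVal v q < ratVal v x → ratVal v x < ratVal v q → ratVal v (θ x) = ratVal v (1 - x)) := by
  have hlim : ∀ x, x ≠ 0 → (∀ j : ℤ, x ≠ q ^ j) → ∃ L, L ≠ 0 ∧ VTendsto v (thetaPart q x) L := by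
    intro x hx hxq
    have ha := vtendsto_geom hq hqv hx
    have hb : VTendsto v (fun m => q ^ (m + 1) * x⁻¹) 0 := by
      have := vtendsto_geom hq hqv (mul_ne_zero hq (inv_ne_zero hx))
      simpa only [pow_succ, mul_assoc] using this
    obtain ⟨N, hN⟩ := ha 1
    obtain ⟨N', hN'⟩ := hb 1
    simp only [sub_zero] at hN hN'
    have hpos : (0 : WithTop ℚ) < ((1 : ℚ) : WithTop ℚ) := by exact_mod_cast one_pos
    have hconst : ∀ m ≥ max N N', v (thetaPart q x m) =
        ((ratVal v (thetaPart q x (max N N')) : ℚ) : WithTop ℚ) := by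
      intro m hm
      induction m, hm using Nat.le_induction with
      | base => exact (coe_ratVal v (thetaPart_ne_zero hq hx hxq _)).symm
      | succ m hm ih =>
        rw [thetaPart_succ, v.map_mul, ih, val_thetaPart_mul
          (hpos.trans_le (hN m (le_trans (le_max_left _ _) hm)))
          (hpos.trans_le (hN' m (le_trans (le_max_right _ _) hm))), add_zero]
    have hex : ∃ L, VTendsto v (thetaPart q x) L := by
      apply exists_limit hcomplete
      intro M
      set c := ratVal v (thetaPart q x (max N N'))
      obtain ⟨N₁, hN₁⟩ := ha (max 0 (M - c))
      obtain ⟨N₂, hN₂⟩ := hb (max 0 (M - c))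
      refine ⟨max (max N N') (max N₁ N₂), fun m hm => ?_⟩
      have h0 := hconst m (le_trans (le_max_left _ _) hm)
      have h1 := hN₁ m (le_trans (le_trans (le_max_left _ _) (le_max_right _ _)) hm)
      have h2 := hN₂ m (le_trans (le_trans (le_max_right _ _) (le_max_right _ _)) hm)
      rw [sub_zero] at h1 h2
      have e : thetaPart q x (m + 1) - thetaPart q x m = thetaPart q x m *
          ((q ^ m * x) * (q ^ (m + 1) * x⁻¹) + -(q ^ m * x) + -(q ^ (m + 1) * x⁻¹)) := by
        rw [thetaPart_succ]; ring
      have h3 : ((M - c : ℚ) : WithTop ℚ) ≤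
          v ((q ^ m * x) * (q ^ (m + 1) * x⁻¹) + -(q ^ m * x) + -(q ^ (m + 1) * x⁻¹)) := by
        have hle : ((M - c : ℚ) : WithTop ℚ) ≤ ((max 0 (M - c) : ℚ) : WithTop ℚ) := by
          rw [WithTop.coe_le_coe]; exact le_max_right _ _
        refine v.map_le_add (v.map_le_add ?_ ?_) ?_
        · rw [v.map_mul]
          refine le_trans ?_ (add_le_add h1 h2)
          rw [← WithTop.coe_add, WithTop.coe_le_coe]
          have := le_max_left 0 (M - c)
          have := le_max_right 0 (M - c)
          linarith
        · rw [v.map_neg]; exact hle.trans h1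
        · rw [v.map_neg]; exact hle.trans h2
      rw [e, v.map_mul, h0]
      refine le_trans ?_ (add_le_add le_rfl h3)
      rw [← WithTop.coe_add, WithTop.coe_le_coe]
      linarith
    obtain ⟨L, hL⟩ := hex
    exact ⟨L, ne_zero_of_val v (hL.val_eq hconst), hL⟩
  refine ⟨fun x => if h : ∃ L, L ≠ 0 ∧ VTendsto v (thetaPart q x) L then Classical.choose h else 0,
    ?_⟩
  intro x hx hxq
  have hspec : ∀ y, y ≠ 0 → (∀ j : ℤ, y ≠ q ^ j) → ∀ L,
      L = (if h : ∃ L, L ≠ 0 ∧ VTendsto v (thetaPart q y) L then Classical.choose h else 0) →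
      L ≠ 0 ∧ VTendsto v (thetaPart q y) L := by
    intro y hy hyq L hL
    rw [dif_pos (hlim y hy hyq)] at hL
    rw [hL]
    exact Classical.choose_spec (hlim y hy hyq)
  beta_reduce
  generalize hL : (if h : ∃ L, L ≠ 0 ∧ VTendsto v (thetaPart q x) L
    then Classical.choose h else 0) = L
  generalize hL' : (if h : ∃ L, L ≠ 0 ∧ VTendsto v (thetaPart q (q * x)) L
    then Classical.choose h else 0) = L'
  obtain ⟨h1, h2⟩ := hspec x hx hxq L hL.symm
  have hqx : ∀ j : ℤ, q * x ≠ q ^ j := by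
    intro j hj
    apply hxq (j - 1)
    rw [zpow_sub₀ hq, ← hj, zpow_one]
    field_simp
  obtain ⟨h1', h2'⟩ := hspec (q * x) (mul_ne_zero hq hx) hqx L' hL'.symm
  refine ⟨h1, h2, ?_, ?_⟩
  · have t1 := h2'.mul ((VTendsto.const (v := v) (1 - x)).mul
      (vtendsto_one_sub (vtendsto_geom hq hqv (inv_ne_zero hx))))
    have t2 := h2.mul ((vtendsto_one_sub (vtendsto_geom hq hqv hx)).mul
      (VTendsto.const (v := v) (1 - x⁻¹)))
    simp only [thetaPart_shift q hq hx] at t1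
    have e := t1.unique t2
    have hx1 : 1 - x ≠ 0 := fun h => hxq 0 (by rw [zpow_zero]; linear_combination -h)
    rw [mul_one, one_mul] at e
    apply mul_right_cancel₀ hx1
    rw [e]
    field_simp
    ring
  · intro hlo hhi
    have hx1 : 1 - x ≠ 0 := fun h => hxq 0 (by rw [zpow_zero]; linear_combination -h)
    apply ratVal_eq
    refine h2.val_eq (N := 1) ?_
    intro m hm
    have hpos : ∀ k : ℕ, ∀ y : K, y ≠ 0 → -ratVal v q < ratVal v y → 0 < v (q ^ (k + 1) * y) := by
      intro k y hy hyv
      rw [← coe_ratVal v (mul_ne_zero (pow_ne_zero _ hq) hy), ← WithTop.coe_zero,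
        WithTop.coe_lt_coe, ratVal_mul v (pow_ne_zero _ hq) hy, ratVal_pow v hq]
      have : (0 : ℚ) ≤ k := Nat.cast_nonneg k
      push_cast
      nlinarith
    have hi : -ratVal v q < ratVal v x⁻¹ := by rw [ratVal_inv v hx]; linarith
    induction m, hm using Nat.le_induction with
    | base =>
      rw [coe_ratVal v hx1]
      simp only [thetaPart, Finset.prod_range_one, pow_zero, one_mul, v.map_mul]
      rw [val_one_sub v (hpos 0 _ (inv_ne_zero hx) hi), add_zero]
    | succ m hm ih =>
      obtain ⟨k, rfl⟩ : ∃ k, m = k + 1 := ⟨m - 1, by omega⟩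
      rw [thetaPart_succ, v.map_mul, ih, val_thetaPart_mul (hpos _ _ hx hlo)
        (hpos _ _ (inv_ne_zero hx) hi), add_zero]

end Valuation

/-! ### Generic elements of `K` -/

section Generic

variable {K : Type*} [Field K] [IsAlgClosed K] {v : AddValuation K (WithTop ℚ)}

/-- The residue field is infinite: some unit differs by units from finitely many given integers.
A root `t` of `∏ (X - b) = 1`, the product including `b = 0`, will do. -/
lemma exists_integral_generic (B : Finset K) (hB : ∀ b ∈ B, 0 ≤ v b) :
    ∃ t : K, v t = 0 ∧ ∀ b ∈ B, v (t - b) = 0 := by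
  have key : ∃ t : K, ∏ b ∈ insert 0 B, (t - b) = 1 := by
    let f : Polynomial K := ∏ b ∈ insert 0 B, (Polynomial.X - Polynomial.C b)
    have hf : f.Monic := Polynomial.monic_prod_of_monic _ _ fun b _ => Polynomial.monic_X_sub_C b
    have hdeg : 0 < f.degree := by
      rw [Polynomial.degree_eq_natDegree hf.ne_zero, Polynomial.natDegree_prod_of_monic _ _
        fun b _ => Polynomial.monic_X_sub_C b]
      simp
    obtain ⟨t, ht⟩ := IsAlgClosed.exists_root (f - Polynomial.C 1) (by
      rw [Polynomial.degree_sub_C hdeg]; exact hdeg.ne')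
    refine ⟨t, ?_⟩
    have : f.eval t - 1 = 0 := by simpa [Polynomial.IsRoot] using ht
    rw [Polynomial.eval_prod] at this
    simpa using sub_eq_zero.mp this
  obtain ⟨t, ht⟩ := key
  have hB' : ∀ b ∈ insert 0 B, 0 ≤ v b := by
    intro b hb
    rcases Finset.mem_insert.mp hb with rfl | hb
    · simp
    · exact hB b hb
  have hsum : ∑ b ∈ insert 0 B, v (t - b) = 0 := by
    have : v (∏ b ∈ insert 0 B, (t - b)) = ∑ b ∈ insert 0 B, v (t - b) := by
      generalize insert 0 B = S
      induction S using Finset.induction_on with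
      | empty => simp
      | insert a s ha ih => rw [Finset.prod_insert ha, Finset.sum_insert ha, v.map_mul, ih]
    rw [← this, ht, v.map_one]
  have ht0 : 0 ≤ v t := by
    by_contra hneg
    push Not at hneg
    have h1 : ∀ b ∈ insert 0 B, v (t - b) < 0 := by
      intro b hb
      rw [sub_eq_add_neg, v.map_add_eq_of_lt_left]
      · exact hneg
      · rw [v.map_neg]; exact hneg.trans_le (hB' b hb)
    have h2 : ∑ b ∈ insert 0 B, v (t - b) ≤ v t := by
      rw [← Finset.add_sum_erase _ _ (Finset.mem_insert_self 0 B), sub_zero]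
      have : ∑ b ∈ (insert 0 B).erase 0, v (t - b) ≤ 0 :=
        Finset.sum_nonpos fun b hb => (h1 b (Finset.mem_of_mem_erase hb)).le
      exact add_le_of_nonpos_right this
    rw [hsum] at h2
    exact absurd h2 (not_le.mpr hneg)
  have hnn : ∀ b ∈ insert 0 B, 0 ≤ v (t - b) := by
    intro b hb
    rw [sub_eq_add_neg]
    exact v.map_le_add ht0 (by rw [v.map_neg]; exact hB' b hb)
  have hz := (Finset.sum_eq_zero_iff_of_nonneg hnn).mp hsum
  exact ⟨t, by simpa using hz 0 (Finset.mem_insert_self _ _),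
    fun b hb => hz b (Finset.mem_insert_of_mem hb)⟩

/-- A generic point of the closed ball of radius `r` around `a`: its distance to each `s` in a finite
set is the largest one (the smallest valuation) allowed by the ball. -/
lemma exists_generic (hsurj : ∀ a : ℚ, ∃ x : K, v x = a) (S : Finset K) (r : ℚ) (a : K) :
    ∃ u : K, ∀ s ∈ S, v (u - s) = min (r : WithTop ℚ) (v (a - s)) := by
  obtain ⟨p, hp⟩ := hsurj r
  have hp0 : p ≠ 0 := ne_zero_of_val v hp
  obtain ⟨t, ht0, ht⟩ := exists_integral_generic (v := v)
    ((S.image fun s => (s - a) / p).filter fun b => 0 ≤ v b) (by simp)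
  refine ⟨a + p * t, fun s hs => ?_⟩
  have hpt : v (p * t) = r := by rw [v.map_mul, hp, ht0, add_zero]
  rcases lt_or_ge (v (a - s)) r with h | h
  · rw [min_eq_right h.le]
    have : a + p * t - s = (a - s) + p * t := by ring
    rw [this, v.map_add_eq_of_lt_left]
    rw [hpt]; exact h
  · rw [min_eq_left h]
    have e : a + p * t - s = p * (t - (s - a) / p) := by field_simp; ring
    have hb : 0 ≤ v ((s - a) / p) := by
      by_cases hsa : s - a = 0
      · simp [hsa]
      · rw [v.map_sub_swap, ← coe_ratVal v hsa, WithTop.coe_le_coe] at h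
        rw [← coe_ratVal v (div_ne_zero hsa hp0), ratVal_div v hsa hp0, ← WithTop.coe_zero,
          WithTop.coe_le_coe, ratVal_eq v hp]
        linarith
    rw [e, v.map_mul, hp, ht _ (Finset.mem_filter.mpr ⟨Finset.mem_image_of_mem _ hs, hb⟩), add_zero]

variable (v) in
/-- Infinitely many units with distinct residues. -/
lemma exists_unit_seq : ∃ f : ℕ → K, (∀ k, v (f k) = 0) ∧ ∀ k l, k ≠ l → v (f k - f l) = 0 := by
  have : Std.Symm fun x y : K => v (x - y) = 0 := ⟨fun x y h => by rwa [v.map_sub_swap]⟩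
  obtain ⟨f, hf, hf'⟩ := exists_seq_of_forall_finset_exists' (fun x : K => v x = 0)
    (fun x y => v (x - y) = 0) (fun s hs => by
      obtain ⟨t, ht, ht'⟩ := exists_integral_generic s (fun b hb => (hs b hb).ge)
      exact ⟨t, ht, fun x hx => by rw [v.map_sub_swap]; exact ht' x hx⟩)
  exact ⟨f, hf, fun k l h => hf' h⟩

end Generic

/-! ### Piecewise linear functions on a metric tree -/

section Tree

variable {X : Type*} [Fintype X]

/-- Let `X` be a finite rooted tree with heights `d`, and let `m x` be the height at which the path
from the root to `x` leaves the path to a fixed point `u` of the tree, or `d x` if it does not leave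
it. Then the nodes with `m x = d x` are those below `u`; they form a chain, and if `w` is the last
of them, `par` maps the chain without the root onto the chain without `w`. -/
lemma tree_image (root : X) (par : X → X) (d m : X → ℚ)
    (hd : ∀ x, x ≠ root → d (par x) < d x) (h0 : m root = d root) (hle : ∀ x, m x ≤ d x)
    (hleave : ∀ x, x ≠ root → m (par x) < d (par x) → m x = m (par x))
    (hsib : ∀ x y, x ≠ root → y ≠ root → x ≠ y → par x = par y → d (par x) < m x →
      m y ≤ d (par y))
    (w : X) (hw : m w = d w) (hch : ∀ x, x ≠ root → par x = w → m x < d x) :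
    Set.InjOn par (Finset.univ.filter fun x => x ≠ root ∧ m x = d x : Finset X) ∧
    (Finset.univ.filter fun x => x ≠ root ∧ m x = d x).image par
      = (Finset.univ.filter fun x => m x = d x).erase w := by
  have hinj : Set.InjOn par (Finset.univ.filter fun x => x ≠ root ∧ m x = d x : Finset X) := by
    intro x hx y hy hxy
    simp only [Finset.coe_filter, Finset.mem_univ, true_and, Set.mem_ofPred_eq] at hx hy
    by_contra hne
    have h1 := hsib x y hx.1 hy.1 hne hxy (by rw [hx.2]; exact hd x hx.1)
    have := hd y hy.1
    linarith [hy.2]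
  refine ⟨hinj, Finset.eq_of_subset_of_card_le ?_ ?_⟩
  · intro y hy
    obtain ⟨x, hx, rfl⟩ := Finset.mem_image.mp hy
    simp only [Finset.mem_filter, Finset.mem_univ, true_and] at hx
    simp only [Finset.mem_erase, Finset.mem_filter, Finset.mem_univ, true_and]
    refine ⟨fun h => ?_, ?_⟩
    · have := hch x hx.1 h
      linarith [hx.2]
    · by_contra hne
      have hlt := lt_of_le_of_ne (hle (par x)) hne
      have := hleave x hx.1 hlt
      have := hd x hx.1
      linarith [hx.2]
  · rw [Finset.card_image_of_injOn hinj,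
      Finset.card_erase_of_mem (by simpa using hw)]
    have : (Finset.univ.filter fun x => m x = d x) =
        insert root (Finset.univ.filter fun x => x ≠ root ∧ m x = d x) := by
      ext x
      by_cases hx : x = root
      · simp [hx, h0]
      · simp [hx]
    rw [this, Finset.card_insert_of_notMem (by simp)]
    simp

/-- In the situation of `tree_image`, the last node below `u` is unique. -/
lemma tree_leaf_unique (root : X) (par : X → X) (d m : X → ℚ)
    (hd : ∀ x, x ≠ root → d (par x) < d x) (h0 : m root = d root) (hle : ∀ x, m x ≤ d x)
    (hleave : ∀ x, x ≠ root → m (par x) < d (par x) → m x = m (par x))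
    (hsib : ∀ x y, x ≠ root → y ≠ root → x ≠ y → par x = par y → d (par x) < m x →
      m y ≤ d (par y))
    (w w' : X) (hw : m w = d w) (hch : ∀ x, x ≠ root → par x = w → m x < d x)
    (hw' : m w' = d w') (hch' : ∀ x, x ≠ root → par x = w' → m x < d x) : w = w' := by
  have h1 := (tree_image root par d m hd h0 hle hleave hsib w hw hch).2
  have h2 := (tree_image root par d m hd h0 hle hleave hsib w' hw' hch').2
  by_contra hne
  have : w ∈ (Finset.univ.filter fun x => m x = d x).erase w' := by simp [hne, hw]
  rw [← h2, h1] at this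
  simp at this

/-- In the situation of `tree_image`, let `p` be a piecewise linear function on the tree with slope
`s x` on the edge leading to `x`, and let `w` be the last node below `u`. The sum over all edges of
the slope times the length of the part below `u` telescopes to `p w - p root`, plus the contribution
of the edge above `w` on which `u` lies, if it is not at `w`. -/
lemma tree_sum (root : X) (par : X → X) (d m p s : X → ℚ)
    (hd : ∀ x, x ≠ root → d (par x) < d x)
    (hp : ∀ x, x ≠ root → p x - p (par x) = (d x - d (par x)) * s x)
    (h0 : m root = d root) (hle : ∀ x, m x ≤ d x)
    (hmono : ∀ x, x ≠ root → m (par x) ≤ m x)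
    (hleave : ∀ x, x ≠ root → m (par x) < d (par x) → m x = m (par x))
    (hsib : ∀ x y, x ≠ root → y ≠ root → x ≠ y → par x = par y → d (par x) < m x →
      m y ≤ d (par y))
    (w : X) (hw : m w = d w) (hch : ∀ x, x ≠ root → par x = w → m x < d x) :
    ∑ x with x ≠ root, (m x - m (par x)) * s x
      = p w - p root + ∑ x with x ≠ root ∧ par x = w, (m x - d w) * s x := by
  obtain ⟨hinj, himg⟩ := tree_image root par d m hd h0 hle hleave hsib w hw hch
  set S := Finset.univ.filter fun x => x ≠ root ∧ m x = d x with hS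
  have hmemS : ∀ x, x ∈ S ↔ x ≠ root ∧ m x = d x := by simp [hS]
  have hmp : ∀ x ∈ S, m (par x) = d (par x) := by
    intro x hx
    have : par x ∈ S.image par := Finset.mem_image_of_mem _ hx
    rw [himg] at this
    simpa using (Finset.mem_of_mem_erase this)
  rw [← Finset.sum_filter_add_sum_filter_not _ (fun x => m x = d x)]
  congr 1
  · have e1 : ∑ x ∈ (Finset.univ.filter fun x => x ≠ root).filter (fun x => m x = d x),
        (m x - m (par x)) * s x = ∑ x ∈ S, (p x - p (par x)) := by
      rw [Finset.filter_filter]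
      refine Finset.sum_congr rfl fun x hx => ?_
      rw [hp x ((hmemS x).mp hx).1, ((hmemS x).mp hx).2, hmp x hx]
    have e2 : ∑ x ∈ S, p (par x) = ∑ y ∈ S.image par, p y :=
      (Finset.sum_image (f := p) hinj).symm
    have e3 : (Finset.univ.filter fun x => m x = d x) = insert root S := by
      ext x
      by_cases hx : x = root
      · simp [hx, h0]
      · simp [hx, hmemS]
    have e4 : ∑ x ∈ S, p x + p root = ∑ y ∈ S.image par, p y + p w := by
      rw [himg, Finset.sum_erase_add _ _ (by simpa using hw), e3,
        Finset.sum_insert (by simp [hmemS]), add_comm]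
    rw [e1, Finset.sum_sub_distrib, e2]
    linarith
  · symm
    rw [Finset.filter_filter]
    have hpw : ∀ x, x ≠ root → par x = w → (m x - d w) * s x = (m x - m (par x)) * s x := by
      intro x _ h
      rw [h, hw]
    rw [Finset.sum_congr rfl (fun x hx => hpw x (by simpa using (Finset.mem_filter.mp hx).2.1)
      (Finset.mem_filter.mp hx).2.2)]
    apply Finset.sum_subset
    · intro x hx
      simp only [Finset.mem_filter, Finset.mem_univ, true_and] at hx ⊢
      exact ⟨hx.1, (hch x hx.1 hx.2).ne⟩
    · intro x hx hx'
      simp only [Finset.mem_filter, Finset.mem_univ, true_and] at hx hx'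
      have hpx : par x ≠ w := fun h => hx' ⟨hx.1, h⟩
      suffices m x = m (par x) by rw [this]; ring
      rcases lt_or_eq_of_le (hle (par x)) with h | h
      · exact hleave x hx.1 h
      · have hmem : par x ∈ S.image par := by
          rw [himg]; simp [hpx, h]
        obtain ⟨y, hy, hyx⟩ := Finset.mem_image.mp hmem
        have hyS := (hmemS y).mp hy
        have hne : y ≠ x := by rintro rfl; exact hx.2 hyS.2
        have := hsib y x hyS.1 hx.1 hne hyx (by rw [hyS.2]; exact hd y hyS.1)
        have := hmono x hx.1
        linarith

end Tree

/-! ### Unrolling the circuit -/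

namespace Unicyclic

variable {V E : Type} [Fintype V] [Fintype E] {n : ℕ} (D : Unicyclic V E n)

/-- Recursion along `par`, starting from the value `y₀` at the root: the value at `w` is `f w`
applied to the value at `par w`. -/
noncomputable def unfoldRec {Y : Type*} (y₀ : Y) (f : V → Y → Y) (w : V) : Y :=
  if h : w = D.root then y₀ else unfoldRec y₀ f (D.par w) |> f w
termination_by D.rank w
decreasing_by exact D.rank_lt w h

lemma unfoldRec_root {Y : Type*} (y₀ : Y) (f : V → Y → Y) : D.unfoldRec y₀ f D.root = y₀ := by
  rw [unfoldRec]; simp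

lemma unfoldRec_of_ne {Y : Type*} (y₀ : Y) (f : V → Y → Y) {w : V} (hw : w ≠ D.root) :
    D.unfoldRec y₀ f w = f w (D.unfoldRec y₀ f (D.par w)) := by
  rw [unfoldRec]; simp [hw]

lemma par_induction {p : V → Prop} (h0 : p D.root)
    (h : ∀ w, w ≠ D.root → p (D.par w) → p w) (w : V) : p w := by
  generalize hk : D.rank w = k
  induction k using Nat.strong_induction_on generalizing w with
  | _ k ih =>
    by_cases hw : w = D.root
    · rw [hw]; exact h0
    · exact h w hw (ih _ (hk ▸ D.rank_lt w hw) _ rfl)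

/-- Summation by parts: the zero tension condition paired with a function `f` on the vertices. -/
lemma sum_by_parts (f : V → ℚ) (i : Fin n) :
    ∑ e, (D.out e i : ℚ) * f (D.src e) = ∑ w, (D.slope w i : ℚ) * (f w - f (D.par w)) := by
  have h1 : ∑ w, (D.slope w i : ℚ) * f (D.par w) =
      ∑ u, ∑ w with D.par w = u, (D.slope w i : ℚ) * f u := by
    rw [← Finset.sum_fiberwise Finset.univ D.par]
    refine Finset.sum_congr rfl fun u _ => Finset.sum_congr rfl fun w hw => ?_
    rw [(Finset.mem_filter.mp hw).2]
  have h2 : ∑ e, (D.out e i : ℚ) * f (D.src e) =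
      ∑ u, ∑ e with D.src e = u, (D.out e i : ℚ) * f u := by
    rw [← Finset.sum_fiberwise Finset.univ D.src]
    refine Finset.sum_congr rfl fun u _ => Finset.sum_congr rfl fun w hw => ?_
    rw [(Finset.mem_filter.mp hw).2]
  simp only [mul_sub, Finset.sum_sub_distrib]
  rw [h1, h2, eq_sub_iff_add_eq, ← Finset.sum_add_distrib]
  refine Finset.sum_congr rfl fun u _ => ?_
  have := D.tension u i
  have h3 : (∑ w with D.par w = u, (D.slope w i : ℚ)) - D.slope u i
      + ∑ e with D.src e = u, (D.out e i : ℚ) = 0 := by exact_mod_cast this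
  rw [← Finset.sum_mul, ← Finset.sum_mul]
  linear_combination f u * h3

lemma sum_out (i : Fin n) : ∑ e, D.out e i = 0 := by
  have := D.sum_by_parts (fun _ => 1) i
  simp only [mul_one, sub_self, mul_zero, Finset.sum_const_zero] at this
  exact_mod_cast this

/-- The length of the path from the root to a vertex that does not use the edge closing the circuit,
that is, the edge from `par root` to `root`. -/
noncomputable def depth : V → ℚ := D.unfoldRec 0 fun w x => x + D.len w

/-- The length of the circuit; it becomes the valuation of the Tate parameter `q`. -/
noncomputable def period : ℚ := D.depth (D.par D.root) + D.len D.root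

/-- The circuit vertex from which the tree containing a given vertex hangs. -/
noncomputable def anchor : V → V := D.unfoldRec D.root fun w x => if D.circ w then w else x

lemma depth_root : D.depth D.root = 0 := D.unfoldRec_root _ _

lemma depth_of_ne {w : V} (hw : w ≠ D.root) : D.depth w = D.depth (D.par w) + D.len w :=
  D.unfoldRec_of_ne _ _ hw

lemma depth_lt {w : V} (hw : w ≠ D.root) : D.depth (D.par w) < D.depth w := by
  rw [D.depth_of_ne hw]; linarith [D.len_pos w]

lemma depth_nonneg (w : V) : 0 ≤ D.depth w := by
  refine D.par_induction (p := fun w => 0 ≤ D.depth w) D.depth_root.ge (fun w hw h => ?_) w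
  exact h.trans (D.depth_lt hw).le

lemma anchor_of_circ {w : V} (hw : D.circ w) : D.anchor w = w := by
  by_cases h : w = D.root
  · rw [h]; exact D.unfoldRec_root _ _
  · rw [anchor, D.unfoldRec_of_ne _ _ h, if_pos hw]

lemma ne_root {w : V} (hw : ¬ D.circ w) : w ≠ D.root := fun h => hw (h ▸ D.circ_root)

lemma anchor_of_not_circ {w : V} (hw : ¬ D.circ w) : D.anchor w = D.anchor (D.par w) := by
  rw [anchor, D.unfoldRec_of_ne _ _ (D.ne_root hw), if_neg hw]

lemma circ_anchor (w : V) : D.circ (D.anchor w) := by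
  refine D.par_induction (p := fun w => D.circ (D.anchor w)) ?_ (fun w hw h => ?_) w
  · rw [D.anchor_of_circ D.circ_root]; exact D.circ_root
  · by_cases hc : D.circ w
    · rwa [D.anchor_of_circ hc]
    · rwa [D.anchor_of_not_circ hc]

lemma depth_anchor_le (w : V) : D.depth (D.anchor w) ≤ D.depth w := by
  refine D.par_induction (p := fun w => D.depth (D.anchor w) ≤ D.depth w) ?_ (fun w hw h => ?_) w
  · rw [D.anchor_of_circ D.circ_root]
  · by_cases hc : D.circ w
    · rw [D.anchor_of_circ hc]
    · rw [D.anchor_of_not_circ hc]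
      exact h.trans (D.depth_lt hw).le

lemma depth_anchor_lt {w : V} (hw : ¬ D.circ w) : D.depth (D.anchor w) < D.depth w := by
  rw [D.anchor_of_not_circ hw]
  exact (D.depth_anchor_le _).trans_lt (D.depth_lt (D.ne_root hw))

lemma image_circ : (Finset.univ.filter D.circ).image D.par = Finset.univ.filter D.circ := by
  apply Finset.eq_of_subset_of_card_le
  · intro y hy
    obtain ⟨x, hx, rfl⟩ := Finset.mem_image.mp hy
    simpa using D.circ_par x (by simpa using hx)
  · rw [Finset.card_image_of_injOn]
    intro x hx y hy h
    exact D.circ_inj x y (by simpa using hx) (by simpa using hy) h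

lemma sum_circ (p : V → ℚ) : ∑ w with D.circ w, (p w - p (D.par w)) = 0 := by
  rw [Finset.sum_sub_distrib, sub_eq_zero]
  conv_lhs => rw [← D.image_circ]
  rw [Finset.sum_image]
  intro x hx y hy h
  exact D.circ_inj x y (by simpa using hx) (by simpa using hy) h

lemma depth_lt_period {w : V} (hw : D.circ w) : D.depth w < D.period := by
  obtain ⟨y, hy, hmax⟩ := Finset.exists_max_image (Finset.univ.filter D.circ) D.depth
    ⟨w, by simpa using hw⟩
  have h1 := hmax w (by simpa using hw)
  rw [← D.image_circ] at hy
  obtain ⟨x, hx, rfl⟩ := Finset.mem_image.mp hy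
  by_cases hxr : x = D.root
  · rw [hxr] at h1
    rw [period]; linarith [D.len_pos D.root]
  · have h2 := hmax x hx
    linarith [D.depth_lt hxr]

lemma period_pos : 0 < D.period := by
  have := D.depth_lt_period D.circ_root
  rwa [D.depth_root] at this

/-- The rays, weighted by the depths at which their branches leave the circuit, sum to `-slope root`
times the period. This is the tropical form of the relation `∏ z_e ^ out e = q ^ (-slope root)`; it
expresses that the circuit closes up. -/
lemma sum_depth_anchor (i : Fin n) :
    ∑ e, (D.out e i : ℚ) * D.depth (D.anchor (D.src e)) = -(D.slope D.root i : ℚ) * D.period := by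
  rw [D.sum_by_parts (fun w => D.depth (D.anchor w))]
  have h : ∀ w, (D.slope w i : ℚ) * (D.depth (D.anchor w) - D.depth (D.anchor (D.par w))) =
      (if D.circ w then D.pos w i - D.pos (D.par w) i else 0) +
      (if w = D.root then -(D.slope D.root i : ℚ) * D.period else 0) := by
    intro w
    by_cases hc : D.circ w
    · rw [D.anchor_of_circ hc, D.anchor_of_circ (D.circ_par w hc), if_pos hc, D.pos_sub]
      by_cases hr : w = D.root
      · subst hr
        rw [if_pos rfl, D.depth_root, period]; ring
      · rw [if_neg hr, D.depth_of_ne hr]; ring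
    · rw [D.anchor_of_not_circ hc, if_neg hc, if_neg (D.ne_root hc)]; ring
  simp only [h, Finset.sum_add_distrib, Finset.sum_ite_eq', Finset.mem_univ, if_true]
  rw [← Finset.sum_filter, D.sum_circ (fun w => D.pos w i), zero_add]

/-- The sum of the rays on the branch hanging from the circuit vertex `w`. -/
noncomputable def branchDeg (w : V) (i : Fin n) : ℤ := ∑ e with D.anchor (D.src e) = w, D.out e i

/-- The branch degrees span `ℚ^n`. If `l` annihilates them, summation by parts gives
`∑ len w * (l · slope w) ^ 2 = 0` over the circuit, so `l` annihilates the slopes on the circuit. -/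
lemma branchDeg_span (l : Fin n → ℚ) (h : ∀ w, ∑ i, l i * (D.branchDeg w i : ℚ) = 0) : l = 0 := by
  apply D.span
  let F : V → ℚ := fun w => ∑ i, l i * D.pos w i
  have h1 : ∑ i, l i * ∑ e, (D.out e i : ℚ) * F (D.anchor (D.src e)) = 0 := by
    have : ∀ i, ∑ e, (D.out e i : ℚ) * F (D.anchor (D.src e)) =
        ∑ w, (D.branchDeg w i : ℚ) * F w := by
      intro i
      rw [← Finset.sum_fiberwise Finset.univ (fun e => D.anchor (D.src e))]
      refine Finset.sum_congr rfl fun w _ => ?_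
      rw [branchDeg, Int.cast_sum, Finset.sum_mul]
      refine Finset.sum_congr rfl fun e he => ?_
      rw [(Finset.mem_filter.mp he).2]
    simp only [this, Finset.mul_sum]
    rw [Finset.sum_comm]
    refine Finset.sum_eq_zero fun w _ => ?_
    have := h w
    calc _ = (∑ i, l i * (D.branchDeg w i : ℚ)) * F w := by
          rw [Finset.sum_mul]; exact Finset.sum_congr rfl fun i _ => by ring
      _ = 0 := by rw [this, zero_mul]
  simp only [fun i => D.sum_by_parts (fun w => F (D.anchor w)) i] at h1
  have h2 : ∑ w with D.circ w, D.len w * (∑ i, l i * (D.slope w i : ℚ)) ^ 2 = 0 := by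
    rw [← h1]
    simp only [Finset.mul_sum]
    rw [Finset.sum_comm, Finset.sum_filter]
    refine Finset.sum_congr rfl fun w _ => ?_
    split_ifs with hc
    · have hF : F w - F (D.par w) = D.len w * ∑ i, l i * (D.slope w i : ℚ) := by
        simp only [F]
        rw [← Finset.sum_sub_distrib, Finset.mul_sum]
        refine Finset.sum_congr rfl fun i _ => ?_
        linear_combination l i * D.pos_sub w i
      rw [D.anchor_of_circ hc, D.anchor_of_circ (D.circ_par w hc), hF]
      simp only [← mul_assoc]
      rw [← Finset.sum_mul, ← Finset.sum_mul]
      ring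
    · rw [D.anchor_of_not_circ hc]; simp
  intro w hw
  have h3 := (Finset.sum_eq_zero_iff_of_nonneg (fun w _ => mul_nonneg (D.len_pos w).le
    (sq_nonneg _))).mp h2 w (by simpa using hw)
  rcases mul_eq_zero.mp h3 with h4 | h4
  · exact absurd h4 (D.len_pos w).ne'
  · exact pow_eq_zero_iff (two_ne_zero) |>.mp h4

end Unicyclic

/-! ### Monomial equations in units -/

section Units

variable {K : Type*} [Field K] [IsAlgClosed K] (v : AddValuation K (WithTop ℚ))

lemma exists_common_den {ι : Type*} [Fintype ι] (f : ι → ℚ) :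
    ∃ (N : ℕ) (g : ι → ℤ), 0 < N ∧ ∀ i, (g i : ℚ) = N * f i := by
  refine ⟨∏ i, (f i).den, fun i => (f i).num * ∏ j ∈ Finset.univ.erase i, ((f j).den : ℤ),
    Finset.prod_pos fun i _ => (f i).den_pos, fun i => ?_⟩
  rw [← Finset.mul_prod_erase _ _ (Finset.mem_univ i)]
  push_cast
  have := Rat.mul_den_eq_num (f i)
  linear_combination (-(∏ j ∈ Finset.univ.erase i, ((f j).den : ℚ))) * this

/-- If the rows of the integer matrix `M` span `ℚ^n`, then the monomial map of tori defined by `M` is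
surjective on units: a rational left inverse of `M`, with denominator `N`, is applied to `N`-th roots
of the given units. -/
lemma exists_unit_solution {V : Type*} [Fintype V] {n : ℕ} (M : V → Fin n → ℤ)
    (hM : ∀ l : Fin n → ℚ, (∀ w, ∑ i, l i * (M w i : ℚ) = 0) → l = 0)
    (β : Fin n → K) (hβ : ∀ i, v (β i) = 0) :
    ∃ α : V → K, (∀ w, v (α w) = 0) ∧ ∀ i, ∏ w, α w ^ M w i = β i := by
  let T : (Fin n → ℚ) →ₗ[ℚ] (V → ℚ) :=
    Matrix.mulVecLin (Matrix.of fun w i => (M w i : ℚ))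
  have hT : LinearMap.ker T = ⊥ := by
    rw [LinearMap.ker_eq_bot']
    intro l hl
    apply hM
    intro w
    have := congrFun hl w
    simpa [T, Matrix.mulVec, dotProduct, mul_comm] using this
  obtain ⟨g, hg⟩ := T.exists_leftInverse_of_injective hT
  let R : Fin n × V → ℚ := fun p => g (Pi.single p.2 1) p.1
  have hR : ∀ i j, ∑ w, R (j, w) * (M w i : ℚ) = if i = j then 1 else 0 := by
    intro i j
    have h1 : g (T (Pi.single i 1)) = Pi.single i 1 := LinearMap.congr_fun hg _
    have h2 : T (Pi.single i 1) = ∑ w, (M w i : ℚ) • (Pi.single w 1 : V → ℚ) := by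
      funext w
      simp [T, Finset.sum_apply, Pi.single_apply]
    rw [h2, map_sum] at h1
    have h3 := congrFun h1 j
    simp only [map_smul, Finset.sum_apply, Pi.smul_apply, smul_eq_mul, Pi.single_apply] at h3
    rw [show (if i = j then (1 : ℚ) else 0) = if j = i then 1 else 0 by simp [eq_comm], ← h3]
    exact Finset.sum_congr rfl fun w _ => mul_comm _ _
  obtain ⟨N, R', hN, hR'⟩ := exists_common_den R
  choose γ hγ using fun i => IsAlgClosed.exists_pow_nat_eq (β i) hN
  have hβ0 : ∀ i, β i ≠ 0 := fun i => ne_zero_of_val v (a := 0) (by simpa using hβ i)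
  have hγ0 : ∀ i, γ i ≠ 0 := by
    intro i h
    apply hβ0 i
    rw [← hγ i, h, zero_pow hN.ne']
  have hγv : ∀ i, ratVal v (γ i) = 0 := by
    intro i
    have := ratVal_pow v (hγ0 i) N
    rw [hγ i, ratVal_eq v (a := 0) (by simpa using hβ i)] at this
    have hN' : (N : ℚ) ≠ 0 := by exact_mod_cast hN.ne'
    exact (mul_eq_zero.mp this.symm).resolve_left hN'
  refine ⟨fun w => ∏ j, γ j ^ R' (j, w), fun w => ?_, fun i => ?_⟩
  · have h0 : ∀ j ∈ Finset.univ, γ j ^ R' (j, w) ≠ 0 := fun j _ => zpow_ne_zero _ (hγ0 j)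
    rw [← coe_ratVal v (Finset.prod_ne_zero_iff.mpr h0), ratVal_prod v _ _ h0]
    simp [ratVal_zpow v (hγ0 _), hγv]
  · have hsum : ∀ j, ∑ w, R' (j, w) * M w i = if i = j then (N : ℤ) else 0 := by
      intro j
      have : ((∑ w, R' (j, w) * M w i : ℤ) : ℚ) = ((if i = j then (N : ℤ) else 0 : ℤ) : ℚ) := by
        push_cast
        simp only [hR', mul_assoc]
        rw [← Finset.mul_sum, hR]
        split_ifs <;> simp
      exact_mod_cast this
    simp only [← Finset.prod_zpow, ← zpow_mul]
    rw [Finset.prod_comm]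
    have : ∀ j, ∏ w, γ j ^ (R' (j, w) * M w i) = γ j ^ (∑ w, R' (j, w) * M w i) := by
      intro j
      generalize (Finset.univ : Finset V) = S
      induction S using Finset.induction_on with
      | empty => simp
      | insert a s ha ih => rw [Finset.prod_insert ha, Finset.sum_insert ha, ih, zpow_add₀ (hγ0 j)]
    simp only [this, hsum]
    rw [Finset.prod_eq_single i]
    · simp [hγ i]
    · intro j _ hj; simp [hj.symm]
    · simp

end Units

/-! ### Trees of balls -/

section ValuedTree

variable {K : Type*} [Field K] (v : AddValuation K (WithTop ℚ)) {X : Type*}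

/-- The height, in the tree of balls `B(a x, d x)`, at which the path to the point `u` leaves
the path to the centre `a x`, truncated at the depth `d x`. -/
noncomputable def height (a : X → K) (d : X → ℚ) (u : K) (x : X) : ℚ :=
  (min (v (u - a x)) (d x)).untopD 0

variable {v} {a : X → K} {d : X → ℚ} {u : K}

lemma coe_height (x : X) : (height v a d u x : WithTop ℚ) = min (v (u - a x)) (d x) := by
  have h : min (v (u - a x)) (d x : WithTop ℚ) ≠ ⊤ :=
    ((min_le_right _ _).trans_lt (WithTop.coe_lt_top _)).ne
  rw [height]
  lift min (v (u - a x)) (d x : WithTop ℚ) to ℚ using h with b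
  simp

lemma height_le (x : X) : height v a d u x ≤ d x := by
  rw [← WithTop.coe_le_coe, coe_height]; exact min_le_right _ _

lemma height_eq {x : X} {r : ℚ} (h : v (u - a x) = r) (hr : r ≤ d x) : height v a d u x = r := by
  rw [← WithTop.coe_inj, coe_height, h, min_eq_left (by exact_mod_cast hr)]

lemma height_eq_depth {x : X} (h : d x ≤ v (u - a x)) : height v a d u x = d x := by
  rw [← WithTop.coe_inj, coe_height, min_eq_right h]

lemma height_le_of {x : X} {r : ℚ} (h : v (u - a x) ≤ r) : height v a d u x ≤ r := by
  rw [← WithTop.coe_le_coe, coe_height]; exact (min_le_left _ _).trans h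

variable {root : X} {par : X → X}

/-- If the centre of each ball lies in the ball of its parent, the path to `u` runs along the path to
`a x` at least as far as along the path to `a (par x)`. -/
lemma height_mono (hd : ∀ x, x ≠ root → d (par x) < d x)
    (hnear : ∀ x, x ≠ root → d (par x) ≤ v (a x - a (par x))) (x : X) (hx : x ≠ root) :
    height v a d u (par x) ≤ height v a d u x := by
  rw [← WithTop.coe_le_coe, coe_height, coe_height]
  refine le_min ?_ ((min_le_right _ _).trans (by exact_mod_cast (hd x hx).le))
  have e : u - a x = (u - a (par x)) - (a x - a (par x)) := by ring
  rw [e]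
  exact le_trans (min_le_min le_rfl (hnear x hx)) (v.map_sub _ _)

/-- If the path to `u` has already left the path to the parent of `x`, continuing to `x` changes
nothing, by the ultrametric inequality. -/
lemma height_leave (hd : ∀ x, x ≠ root → d (par x) < d x)
    (hnear : ∀ x, x ≠ root → d (par x) ≤ v (a x - a (par x))) (x : X) (hx : x ≠ root)
    (h : height v a d u (par x) < d (par x)) : height v a d u x = height v a d u (par x) := by
  rw [← WithTop.coe_lt_coe, coe_height, min_lt_iff] at h
  have h1 : v (u - a (par x)) < d (par x) := h.resolve_right (lt_irrefl _)
  have e : u - a x = (u - a (par x)) + -(a x - a (par x)) := by ring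
  have h2 : v (u - a x) = v (u - a (par x)) := by
    rw [e]
    exact v.map_add_eq_of_lt_left (by rw [v.map_neg]; exact h1.trans_le (hnear x hx))
  rw [← WithTop.coe_inj, coe_height, coe_height, h2, min_eq_left h1.le, min_eq_left]
  exact h1.le.trans (by exact_mod_cast (hd x hx).le)

/-- If siblings separate exactly at the depth of their parent, the path to `u` follows at most one of
them beyond that depth. -/
lemma height_sib (hsib : ∀ x y, x ≠ root → y ≠ root → x ≠ y → par x = par y →
      v (a x - a y) = d (par x)) (x y : X) (hx : x ≠ root) (hy : y ≠ root) (hxy : x ≠ y)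
    (hp : par x = par y) (h : d (par x) < height v a d u x) :
    height v a d u y ≤ d (par y) := by
  apply height_le_of
  rw [← WithTop.coe_lt_coe, coe_height, lt_min_iff] at h
  have e : u - a y = (a x - a y) + (u - a x) := by ring
  rw [e, v.map_add_eq_of_lt_left (by rw [hsib x y hx hy hxy hp]; exact h.1),
    hsib x y hx hy hxy hp, hp]

end ValuedTree

/-! ### Realising the unrolled tree in `K` -/

namespace Unicyclic

variable {V E : Type} [Fintype V] [Fintype E] {n : ℕ} (D : Unicyclic V E n)

/-- The nodes of the tree obtained by unrolling the circuit once: `some (inl w)` is the vertex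
`w`, `some (inr e)` the far end of the ray `e`, and `none` the second copy of the root. -/
abbrev Node (V E : Type) := Option (V ⊕ E)

/-- The vertex `w` as a node. -/
abbrev vert (w : V) : Node V E := some (Sum.inl w)

/-- The far end of the ray `e`. -/
abbrev leaf (e : E) : Node V E := some (Sum.inr e)

/-- The vertex preceding a node. -/
def nodePar : Node V E → V
  | none => D.par D.root
  | some (Sum.inl w) => D.par w
  | some (Sum.inr e) => D.src e

/-- The nodes on the unrolled circuit. -/
def nodeCirc : Node V E → Prop
  | none => True
  | some (Sum.inl w) => D.circ w
  | some (Sum.inr _) => False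

/-- Depth of a node, the rays being cut at length `T`. -/
noncomputable def nodeDepth (T : ℚ) : Node V E → ℚ
  | none => D.period
  | some (Sum.inl w) => D.depth w
  | some (Sum.inr e) => D.depth (D.src e) + T

/-- Slope of the edge leading to a node. -/
def nodeSlope : Node V E → Fin n → ℤ
  | none => D.slope D.root
  | some (Sum.inl w) => D.slope w
  | some (Sum.inr e) => D.out e

/-- Position of a node, the rays being cut at length `T`. -/
def nodePos (T : ℚ) (i : Fin n) : Node V E → ℚ
  | none => D.pos D.root i
  | some (Sum.inl w) => D.pos w i
  | some (Sum.inr e) => D.pos (D.src e) i + T * D.out e i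

lemma nodeDepth_lt {T : ℚ} (hT : 0 < T) (x : Node V E) (hx : x ≠ vert D.root) :
    D.nodeDepth T (vert (D.nodePar x)) < D.nodeDepth T x := by
  rcases x with _ | w | e
  · simp only [nodeDepth, nodePar, period]; linarith [D.len_pos D.root]
  · exact D.depth_lt (fun h => hx (by rw [h]))
  · simp only [nodeDepth, nodePar]; linarith

lemma nodePos_sub (T : ℚ) (i : Fin n) (x : Node V E) (hx : x ≠ vert D.root) :
    D.nodePos T i x - D.nodePos T i (vert (D.nodePar x)) =
      (D.nodeDepth T x - D.nodeDepth T (vert (D.nodePar x))) * D.nodeSlope x i := by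
  rcases x with _ | w | e
  · simp only [nodeDepth, nodePar, period, nodePos, nodeSlope]
    linear_combination D.pos_sub D.root i
  · have : w ≠ D.root := fun h => hx (by rw [h])
    simp only [nodeDepth, nodePar, nodePos, nodeSlope]
    rw [D.depth_of_ne this]
    linear_combination D.pos_sub w i
  · simp only [nodeDepth, nodePar, nodePos, nodeSlope]; ring

/-- The circuit does not branch within itself. -/
lemma nodeCirc_inj (x y : Node V E) (hx : x ≠ vert D.root) (hy : y ≠ vert D.root)
    (hxc : D.nodeCirc x) (hyc : D.nodeCirc y) (h : D.nodePar x = D.nodePar y) : x = y := by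
  rcases x with _ | w | e <;> rcases y with _ | w' | e'
  · rfl
  · exact absurd (congrArg vert (D.circ_inj _ _ D.circ_root hyc h).symm) hy
  · exact hyc.elim
  · exact absurd (congrArg vert (D.circ_inj _ _ hxc D.circ_root h)) hx
  · rw [D.circ_inj _ _ hxc hyc h]
  · exact hyc.elim
  · exact hxc.elim
  · exact hxc.elim
  · exact hxc.elim

/-- Summation by parts on the unrolled tree. By the zero tension condition the contributions of the
vertices cancel, except that unrolling cuts the closing edge of the circuit off from the root. -/
lemma sum_nodes (m : Node V E → ℚ) (hm : m (vert D.root) = 0) (i : Fin n) :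
    ∑ x with x ≠ vert D.root, (m x - m (vert (D.nodePar x))) * (D.nodeSlope x i : ℚ) =
      (D.slope D.root i : ℚ) * m none + ∑ e, (D.out e i : ℚ) * m (leaf e) := by
  rw [Finset.filter_ne', Finset.sum_erase_eq_sub (Finset.mem_univ _), Fintype.sum_option, Fintype.sum_sum_type]
  have h := D.sum_by_parts (fun w => m (vert w)) i
  simp only [nodePar, nodeSlope, hm, sub_mul, Finset.sum_sub_distrib, mul_sub] at h ⊢
  have e1 : ∀ w, (D.slope w i : ℚ) * m (vert w) = m (vert w) * D.slope w i := fun w => mul_comm _ _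
  have e2 : ∀ w, (D.slope w i : ℚ) * m (vert (D.par w)) = m (vert (D.par w)) * D.slope w i :=
    fun w => mul_comm _ _
  have e3 : ∀ e, (D.out e i : ℚ) * m (vert (D.src e)) = m (vert (D.src e)) * D.out e i :=
    fun w => mul_comm _ _
  have e4 : ∀ e, (D.out e i : ℚ) * m (leaf e) = m (leaf e) * D.out e i :=
    fun w => mul_comm _ _
  simp only [e1, e2, e3, e4] at h ⊢
  linear_combination -h

section Centers

variable {K : Type*} [Field K] (v : AddValuation K (WithTop ℚ))

/-- The points `a x` realise the unrolled tree as a tree of balls `B(a x, depth x)` in `K`. The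
circuit becomes the path of the balls around `0`, and a branch leaves it at the depth of its anchor.
The last condition is what periodicity under `u ↦ q u` requires of the zeros and poles
`a (leaf e)`. -/
structure Centers (q : K) (a : Node V E → K) : Prop where
  none_zero : a none = 0
  circ_zero : ∀ w, D.circ w → a (vert w) = 0
  val_vert : ∀ w, ¬ D.circ w → v (a (vert w)) = (D.depth (D.anchor w) : WithTop ℚ)
  val_leaf : ∀ e, v (a (leaf e)) = (D.depth (D.anchor (D.src e)) : WithTop ℚ)
  near : ∀ x, x ≠ vert D.root →
    (D.depth (D.nodePar x) : WithTop ℚ) ≤ v (a x - a (vert (D.nodePar x)))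
  sib : ∀ x y, x ≠ vert D.root → y ≠ vert D.root → x ≠ y → D.nodePar x = D.nodePar y →
    v (a x - a y) = (D.depth (D.nodePar x) : WithTop ℚ)
  prod_leaf : ∀ i, ∏ e, a (leaf e) ^ D.out e i = q ^ (-D.slope D.root i)

/-- Centres exist. Choosing them recursively, with a different unit for each edge off the circuit,
gives a tree of balls of the right shape, which survives multiplying each branch by a unit of its
own. By `sum_depth_anchor` the two sides of `prod_leaf` have the same valuation to begin with, and
these units make them equal. -/
lemma exists_centers [IsAlgClosed K] (hsurj : ∀ a : ℚ, ∃ x : K, v x = a) {q : K} (hq0 : q ≠ 0)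
    (hq : ratVal v q = D.period) : ∃ a : Node V E → K, D.Centers v q a := by
  obtain ⟨f, hf, hf'⟩ := exists_unit_seq v
  choose t ht using hsurj
  -- `η x` separates `x` from its siblings, and it vanishes on the circuit, which stays centred at `0`.
  let η : Node V E → K := fun x => if D.nodeCirc x then 0 else f (Fintype.equivFin (Node V E) x)
  have hη0 : ∀ x, D.nodeCirc x → η x = 0 := fun x hx => if_pos hx
  have hη1 : ∀ x, ¬ D.nodeCirc x → v (η x) = 0 := fun x hx => by
    simp only [η, if_neg hx, hf]
  have hηnn : ∀ x, 0 ≤ v (η x) := fun x => by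
    by_cases hx : D.nodeCirc x
    · simp [hη0 x hx]
    · exact (hη1 x hx).ge
  have hη2 : ∀ x y, x ≠ y → ¬ (D.nodeCirc x ∧ D.nodeCirc y) → v (η x - η y) = 0 := by
    intro x y hxy hc
    by_cases hx : D.nodeCirc x
    · have hy : ¬ D.nodeCirc y := fun hy => hc ⟨hx, hy⟩
      rw [hη0 x hx, zero_sub, v.map_neg, hη1 y hy]
    · by_cases hy : D.nodeCirc y
      · rw [hη0 y hy, sub_zero, hη1 x hx]
      · simp only [η, if_neg hx, if_neg hy]
        apply hf'
        intro h
        exact hxy ((Fintype.equivFin (Node V E)).injective (Fin.ext h))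
  let bV : V → K := D.unfoldRec 0 fun w y => y + η (vert w) * t (D.depth (D.par w))
  let b : Node V E → K
    | none => 0
    | some (Sum.inl w) => bV w
    | some (Sum.inr e) => bV (D.src e) + η (leaf e) * t (D.depth (D.src e))
  have hbc : ∀ w, D.circ w → bV w = 0 := by
    intro w
    refine D.par_induction (p := fun w => D.circ w → bV w = 0) (fun _ => D.unfoldRec_root _ _)
      (fun w hw ih hc => ?_) w
    simp only [bV]
    rw [D.unfoldRec_of_ne _ _ hw]
    rw [hη0 (vert w) hc, zero_mul, add_zero]
    exact ih (D.circ_par w hc)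
  have hb : ∀ x, x ≠ vert D.root →
      b x = bV (D.nodePar x) + η x * t (D.depth (D.nodePar x)) := by
    intro x hx
    rcases x with _ | w | e
    · have h1 : b none = 0 := rfl
      have h2 : bV (D.nodePar (none : Node V E)) = 0 := hbc _ (D.circ_par _ D.circ_root)
      rw [h1, h2, hη0 none trivial]; ring
    · exact D.unfoldRec_of_ne _ _ (fun h => hx (by rw [h]))
    · rfl
  have hvb' : ∀ w, ¬ D.circ w → v (bV w) = (D.depth (D.anchor w) : WithTop ℚ) := by
    intro w
    refine D.par_induction (p := fun w => ¬ D.circ w → v (bV w) = (D.depth (D.anchor w) : WithTop ℚ))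
      (fun h => absurd D.circ_root h) (fun w hw ih hc => ?_) w
    have h1 : bV w = bV (D.par w) + η (vert w) * t (D.depth (D.par w)) :=
      hb (vert w) (fun h => hw (by simpa using h))
    have h2 : v (η (vert w) * t (D.depth (D.par w))) = (D.depth (D.par w) : WithTop ℚ) := by
      rw [v.map_mul, hη1 (vert w) hc, ht, zero_add]
    rw [D.anchor_of_not_circ hc]
    by_cases hp : D.circ (D.par w)
    · rw [h1, hbc _ hp, zero_add, h2, D.anchor_of_circ hp]
    · rw [h1, v.map_add_eq_of_lt_left, ih hp]
      rw [ih hp, h2]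
      exact_mod_cast D.depth_anchor_lt hp
  have hvb : ∀ e, v (b (leaf e)) = (D.depth (D.anchor (D.src e)) : WithTop ℚ) := by
    intro e
    have h1 : b (leaf e) = bV (D.src e) + η (leaf e) * t (D.depth (D.src e)) := rfl
    have h2 : v (η (leaf e) * t (D.depth (D.src e))) = (D.depth (D.src e) : WithTop ℚ) := by
      rw [v.map_mul, hη1 (leaf e) (fun h => h), ht, zero_add]
    by_cases hp : D.circ (D.src e)
    · rw [h1, hbc _ hp, zero_add, h2, D.anchor_of_circ hp]
    · rw [h1, v.map_add_eq_of_lt_left, hvb' _ hp]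
      rw [hvb' _ hp, h2]
      exact_mod_cast D.depth_anchor_lt hp
  have hb0 : ∀ e, b (leaf e) ≠ 0 := fun e => ne_zero_of_val v (hvb e)
  -- The branch at the circuit vertex `w` is to be multiplied by `α w`; solvability rests on the
  -- circuit slopes spanning `ℚ^n`.
  obtain ⟨α, hα, hαβ⟩ := exists_unit_solution v D.branchDeg D.branchDeg_span
    (fun i => q ^ (-D.slope D.root i) / ∏ e, b (leaf e) ^ D.out e i) (by
      intro i
      have h1 : ∀ e ∈ Finset.univ, b (leaf e) ^ D.out e i ≠ 0 := fun e _ => zpow_ne_zero _ (hb0 e)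
      have h2 : q ^ (-D.slope D.root i) ≠ 0 := zpow_ne_zero _ hq0
      have h3 := Finset.prod_ne_zero_iff.mpr h1
      rw [← coe_ratVal v (div_ne_zero h2 h3), ratVal_div v h2 h3, ratVal_prod v _ _ h1,
        ratVal_zpow v hq0, hq]
      simp only [fun e => ratVal_zpow v (hb0 e), fun e => ratVal_eq v (hvb e), D.sum_depth_anchor]
      exact WithTop.coe_eq_zero.mpr (by push_cast; ring))
  have hα0 : ∀ w, α w ≠ 0 := fun w => ne_zero_of_val v (a := 0) (by simpa using hα w)
  let a : Node V E → K
    | none => 0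
    | some (Sum.inl w) => α (D.anchor w) * bV w
    | some (Sum.inr e) => α (D.anchor (D.src e)) * b (leaf e)
  have ha : ∀ x, x ≠ vert D.root → a x = α (D.anchor (D.nodePar x)) * b x := by
    intro x hx
    rcases x with _ | w | e
    · exact (mul_zero _).symm
    · by_cases hc : D.circ w
      · simp only [a, b, hbc w hc, mul_zero]
      · simp only [a, b, nodePar, D.anchor_of_not_circ hc]
    · rfl
  have hap : ∀ w, a (vert w) = α (D.anchor w) * bV w := fun w => rfl
  refine ⟨a, rfl, fun w hw => ?_, fun w hw => ?_, fun e => ?_, fun x hx => ?_,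
    fun x y hx hy hxy hp => ?_, fun i => ?_⟩
  · rw [hap, hbc w hw, mul_zero]
  · rw [hap, v.map_mul, hα, zero_add, hvb' w hw]
  · change v (α (D.anchor (D.src e)) * b (leaf e)) = _
    rw [v.map_mul, hα, zero_add, hvb]
  · rw [ha x hx, hap, hb x hx, ← mul_sub, add_sub_cancel_left, v.map_mul, v.map_mul, hα, ht, zero_add]
    exact le_add_of_nonneg_left (hηnn x)
  · rw [ha x hx, ha y hy, hb x hx, hb y hy, ← hp]
    have e1 : ∀ A B C D t : K, A * (B + C * t) - A * (B + D * t) = A * ((C - D) * t) := by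
      intros; ring
    rw [e1, v.map_mul, v.map_mul, hα, ht, hη2 x y hxy
      (fun h => hxy (D.nodeCirc_inj x y hx hy h.1 h.2 hp)), zero_add, zero_add]
  · have h1 : ∀ e, a (leaf e) ^ D.out e i =
        α (D.anchor (D.src e)) ^ D.out e i * b (leaf e) ^ D.out e i := fun e => mul_zpow _ _ _
    have h2 : ∏ e, α (D.anchor (D.src e)) ^ D.out e i = ∏ w, α w ^ D.branchDeg w i := by
      rw [← Finset.prod_fiberwise Finset.univ (fun e => D.anchor (D.src e))]
      refine Finset.prod_congr rfl fun w _ => ?_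
      rw [branchDeg]
      generalize hS : (Finset.univ.filter fun e => D.anchor (D.src e) = w) = S
      have hS' : ∀ e ∈ S, D.anchor (D.src e) = w := by rw [← hS]; simp
      clear hS
      induction S using Finset.induction_on with
      | empty => simp
      | insert e s he ih =>
        rw [Finset.prod_insert he, Finset.sum_insert he, zpow_add₀ (hα0 w),
          ih fun e he => hS' e (Finset.mem_insert_of_mem he), hS' e (Finset.mem_insert_self _ _)]
    simp only [h1]
    rw [Finset.prod_mul_distrib, h2, hαβ, div_mul_cancel₀]
    exact Finset.prod_ne_zero_iff.mpr fun e _ => zpow_ne_zero _ (hb0 e)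

end Centers

end Unicyclic

/-! ### The image of the valuation -/

namespace Unicyclic

variable {V E : Type} [Fintype V] [Fintype E] {n : ℕ} (D : Unicyclic V E n)
variable {K : Type*} [Field K] (v : AddValuation K (WithTop ℚ))

/-- For `u` in the annulus `0 ≤ v u < v q`, the valuation of the `i`-th coordinate of the lift with
zeros and poles `z e` (see `val_phi`). -/
noncomputable def value (z : E → K) (u : K) (i : Fin n) : ℚ :=
  D.pos D.root i + D.slope D.root i * ratVal v u + ∑ e, D.out e i * ratVal v (u - z e)

variable {D v} {q : K} {a : Node V E → K}

lemma Centers.root_zero (hC : D.Centers v q a) : a (vert D.root) = 0 := hC.circ_zero _ D.circ_root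

lemma Centers.sib_depth (hC : D.Centers v q a) (T : ℚ) (x y : Node V E) (hx : x ≠ vert D.root) (hy : y ≠ vert D.root)
    (hxy : x ≠ y) (h : (vert (D.nodePar x) : Node V E) = vert (D.nodePar y)) :
    v (a x - a y) = (D.nodeDepth T (vert (D.nodePar x)) : WithTop ℚ) :=
  hC.sib x y hx hy hxy (by simpa using h)

lemma Centers.height_root (hC : D.Centers v q a) (T : ℚ) {u : K} (hu : 0 ≤ v u) :
    height v a (D.nodeDepth T) u (vert D.root) = D.nodeDepth T (vert D.root) := by
  apply height_eq_depth
  rw [hC.root_zero, sub_zero]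
  simpa [nodeDepth, D.depth_root] using hu

/-- Let `w` be the last vertex below `u` in the tree of balls, with the rays cut at a length `T` that
`u` does not reach. Then the value at `u` is the position of `w`, plus the displacement along the
edge or ray above `w` on which `u` lies, if it is not at `w`. -/
lemma Centers.value_eq (hC : D.Centers v q a) {T : ℚ} (hT : 0 < T) {u : K} (hu0 : u ≠ 0) (hu : 0 ≤ ratVal v u)
    (hu' : ratVal v u < D.period) (hz : ∀ e, u ≠ a (leaf e))
    (hzT : ∀ e, ratVal v (u - a (leaf e)) < T) (w : V)
    (hw : height v a (D.nodeDepth T) u (vert w) = D.depth w)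
    (hch : ∀ w', w' ≠ D.root → D.par w' = w →
      height v a (D.nodeDepth T) u (vert w') < D.depth w') (i : Fin n) :
    D.value v (fun e => a (leaf e)) u i = D.pos w i +
      ∑ x with x ≠ vert D.root ∧ (vert (D.nodePar x) : Node V E) = vert w,
        (height v a (D.nodeDepth T) u x - D.depth w) * (D.nodeSlope x i : ℚ) := by
  have hvu : 0 ≤ v u := by rw [← coe_ratVal v hu0]; exact_mod_cast hu
  have hnone : height v a (D.nodeDepth T) u none = ratVal v u :=
    height_eq (by rw [hC.none_zero, sub_zero, coe_ratVal v hu0]) hu'.le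
  have hleaf : ∀ e, height v a (D.nodeDepth T) u (leaf e) = ratVal v (u - a (leaf e)) := by
    intro e
    refine height_eq (by rw [coe_ratVal v (sub_ne_zero.mpr (hz e))]) ?_
    have := D.depth_nonneg (D.src e)
    have := hzT e
    simp only [nodeDepth]; linarith
  have hroot := hC.height_root T hvu
  have hd0 : D.nodeDepth T (vert D.root) = 0 := D.depth_root
  have key := tree_sum (vert D.root) (fun x => vert (D.nodePar x)) (D.nodeDepth T)
    (height v a (D.nodeDepth T) u) (D.nodePos T i) (fun x => (D.nodeSlope x i : ℚ))
    (D.nodeDepth_lt hT) (D.nodePos_sub T i) hroot height_le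
    (height_mono (D.nodeDepth_lt hT) hC.near) (height_leave (D.nodeDepth_lt hT) hC.near)
    (height_sib (hC.sib_depth T)) (vert w) hw (by
      intro x hx hxw
      rcases x with _ | w' | e
      · rw [hnone]; exact hu'
      · exact hch w' (fun h => hx (by rw [h])) (by simpa [nodePar] using hxw)
      · rw [hleaf]
        have := D.depth_nonneg (D.src e)
        have := hzT e
        simp only [nodeDepth]; linarith)
  have hsum := D.sum_nodes _ (hroot.trans hd0) i
  rw [hnone] at hsum
  simp only [hleaf] at hsum
  have key' : (D.slope D.root i : ℚ) * ratVal v u + ∑ e, (D.out e i : ℚ) * ratVal v (u - a (leaf e))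
      = D.pos w i - D.pos D.root i +
        ∑ x with x ≠ vert D.root ∧ (vert (D.nodePar x) : Node V E) = vert w,
          (height v a (D.nodeDepth T) u x - D.depth w) * (D.nodeSlope x i : ℚ) := by
    rw [← hsum]
    change _ = D.nodePos T i (vert w) - D.nodePos T i (vert D.root) + _
    convert key
    rfl
  rw [value]
  linarith

lemma exists_bound (f : E → ℚ) : ∃ T : ℚ, 0 < T ∧ ∀ e, f e < T := by
  refine ⟨1 + ∑ e, |f e|, by positivity, fun e => ?_⟩
  have := Finset.single_le_sum (f := fun e => |f e|) (fun _ _ => abs_nonneg _) (Finset.mem_univ e)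
  linarith [le_abs_self (f e)]

lemma pos_mem_image (w : V) : (fun i => D.pos w i) ∈ D.Image :=
  Or.inl ⟨w, D.len w, (D.len_pos w).le, le_rfl, fun i => by linarith [D.pos_sub w i]⟩

/-- The values at points of the annulus `0 ≤ v u < v q` lie on the curve. -/
lemma Centers.value_mem (hC : D.Centers v q a) {u : K} (hu0 : u ≠ 0) (hu : 0 ≤ ratVal v u)
    (hu' : ratVal v u < D.period) (hz : ∀ e, u ≠ a (leaf e)) :
    (D.value v (fun e => a (leaf e)) u) ∈ D.Image := by
  obtain ⟨T, hT, hzT⟩ := exists_bound fun e => ratVal v (u - a (leaf e))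
  have hvu : 0 ≤ v u := by rw [← coe_ratVal v hu0]; exact_mod_cast hu
  set m := height v a (D.nodeDepth T) u with hm
  obtain ⟨w, hw, hmax⟩ := Finset.exists_max_image
    (Finset.univ.filter fun w => m (vert w) = D.depth w) D.depth
    ⟨D.root, Finset.mem_filter.mpr ⟨Finset.mem_univ _, hC.height_root T hvu⟩⟩
  replace hw : m (vert w) = D.depth w := by simpa using hw
  have hval := hC.value_eq hT hu0 hu hu' hz hzT w hw (by
    intro w' hw' hp
    refine lt_of_le_of_ne (height_le (vert w')) fun h => ?_
    have h1 := hmax w' (by simpa using h)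
    have h2 := D.depth_lt hw'
    rw [hp] at h2
    linarith)
  rw [← hm] at hval
  have hge : ∀ x, x ≠ vert D.root → (vert (D.nodePar x) : Node V E) = vert w →
      D.depth w ≤ m x := by
    intro x hx hp
    have := height_mono (u := u) (D.nodeDepth_lt hT) hC.near x hx
    rw [hp, ← hm, hw] at this
    exact this
  -- Either `u` lies in the interior of the edge or ray leading to a unique node `x` above `w`, or it
  -- is at `w` itself.
  by_cases hx : ∃ x, x ≠ vert D.root ∧ (vert (D.nodePar x) : Node V E) = vert w ∧
      D.depth w < m x
  · obtain ⟨x, hx, hxw, hlt⟩ := hx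
    have hval' : ∀ i, D.value v (fun e => a (leaf e)) u i =
        D.pos w i + (m x - D.depth w) * (D.nodeSlope x i : ℚ) := by
      intro i
      rw [hval i, Finset.sum_eq_single x]
      · intro y hy hyx
        simp only [Finset.mem_filter, Finset.mem_univ, true_and] at hy
        have h1 := height_sib (u := u) (hC.sib_depth T) x y hx hy.1 hyx.symm
          (hxw.trans hy.2.symm) (by rw [hxw]; exact hlt)
        rw [hy.2] at h1
        have h2 : m y = D.depth w := le_antisymm h1 (hge y hy.1 hy.2)
        rw [h2]; ring
      · intro h; exact absurd (Finset.mem_filter.mpr ⟨Finset.mem_univ _, hx, hxw⟩) h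
    have hle : m x ≤ D.nodeDepth T x := height_le x
    rcases x with _ | w' | e
    · have hp : D.par D.root = w := by simpa [nodePar] using hxw
      refine Or.inl ⟨D.root, _, (sub_pos.mpr hlt).le, ?_, fun i => ?_⟩
      · rw [← hp]; simp only [nodeDepth, period] at hle; linarith
      · rw [hval', hp]; rfl
    · have hp : D.par w' = w := by simpa [nodePar] using hxw
      refine Or.inl ⟨w', _, (sub_pos.mpr hlt).le, ?_, fun i => ?_⟩
      · have := D.depth_of_ne (w := w') (fun h => hx (by rw [h]))
        rw [← hp]; simp only [nodeDepth] at hle; linarith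
      · rw [hval', hp]; rfl
    · have hp : D.src e = w := by simpa [nodePar] using hxw
      refine Or.inr ⟨e, _, (sub_pos.mpr hlt).le, fun i => ?_⟩
      rw [hval', hp]; rfl
  · push Not at hx
    have : D.value v (fun e => a (leaf e)) u = fun i => D.pos w i := by
      funext i
      rw [hval i, Finset.sum_eq_zero, add_zero]
      intro y hy
      simp only [Finset.mem_filter, Finset.mem_univ, true_and] at hy
      rw [le_antisymm (hx y hy.1 hy.2) (hge y hy.1 hy.2)]; ring
    rw [this]
    exact pos_mem_image w

lemma Centers.val_nonneg (hC : D.Centers v q a) (x : Node V E) : 0 ≤ v (a x) := by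
  rcases x with _ | w | e
  · rw [hC.none_zero]; simp
  · by_cases hc : D.circ w
    · rw [hC.circ_zero w hc]; simp
    · rw [hC.val_vert w hc]; exact_mod_cast D.depth_nonneg _
  · rw [hC.val_leaf e]; exact_mod_cast D.depth_nonneg _

/-- For each radius `r` there is a point `u` of the annulus, outside any given finite set, at the height
`r` on the path to `a c` and branching off there in a direction different from every centre. -/
lemma Centers.exists_generic_point (hC : D.Centers v q a) [IsAlgClosed K] (hsurj : ∀ a : ℚ, ∃ x : K, v x = a)
    (B : Finset K) (c : Node V E) (r : ℚ) (hr : 0 ≤ r)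
    (hper : r < D.period ∨ v (a c) < D.period) :
    ∃ u, u ∉ B ∧ u ≠ 0 ∧ 0 ≤ ratVal v u ∧ ratVal v u < D.period ∧ (∀ y, u ≠ a y) ∧
      ∀ y, v (u - a y) = min (r : WithTop ℚ) (v (a c - a y)) := by
  obtain ⟨u, hu⟩ := exists_generic hsurj (insert 0 B ∪ Finset.univ.image a) r (a c)
  have hS : u ∉ insert 0 B ∪ Finset.univ.image a := by
    intro h
    have h1 := hu u h
    rw [sub_self, v.map_zero] at h1
    exact absurd ((min_le_left _ _).trans_lt (WithTop.coe_lt_top r)) (by rw [← h1]; simp)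
  simp only [Finset.mem_union, Finset.mem_insert, Finset.mem_image, Finset.mem_univ, true_and,
    not_or, not_exists] at hS
  have hvu := hu 0 (by simp)
  rw [sub_zero, sub_zero] at hvu
  refine ⟨u, hS.1.2, hS.1.1, ?_, ?_, fun y h => hS.2 y h.symm, fun y => hu _ (by simp)⟩
  · rw [← WithTop.coe_le_coe, coe_ratVal v hS.1.1, hvu]
    exact le_min (by exact_mod_cast hr) (hC.val_nonneg c)
  · rw [← WithTop.coe_lt_coe, coe_ratVal v hS.1.1, hvu]
    rcases hper with h | h
    · exact (min_le_left _ _).trans_lt (by exact_mod_cast h)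
    · exact (min_le_right _ _).trans_lt h

lemma depth_anchor_lt_period (w : V) : D.depth (D.anchor w) < D.period :=
  D.depth_lt_period (D.circ_anchor w)

/-- The position of every vertex is a value. -/
lemma Centers.exists_vertex (hC : D.Centers v q a) [IsAlgClosed K] (hsurj : ∀ a : ℚ, ∃ x : K, v x = a)
    (B : Finset K) (w : V) :
    ∃ u, u ∉ B ∧ u ≠ 0 ∧ 0 ≤ ratVal v u ∧ ratVal v u < D.period ∧ (∀ e, u ≠ a (leaf e)) ∧
      ∀ i, D.value v (fun e => a (leaf e)) u i = D.pos w i := by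
  obtain ⟨u, huB, hu0, hu1, hu2, hu3, hu⟩ := hC.exists_generic_point hsurj B (vert w) (D.depth w)
    (D.depth_nonneg w) (by
      by_cases hc : D.circ w
      · exact Or.inl (D.depth_lt_period hc)
      · right; rw [hC.val_vert w hc]; exact_mod_cast depth_anchor_lt_period w)
  obtain ⟨T, hT, hzT⟩ := exists_bound fun e => ratVal v (u - a (leaf e))
  refine ⟨u, huB, hu0, hu1, hu2, fun e => hu3 _, fun i => ?_⟩
  have hw : height v a (D.nodeDepth T) u (vert w) = D.depth w := by
    refine height_eq ?_ le_rfl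
    rw [hu, sub_self, v.map_zero, min_eq_left le_top]
  have hle : ∀ x, height v a (D.nodeDepth T) u x ≤ D.depth w := fun x =>
    height_le_of (by rw [hu]; exact min_le_left _ _)
  rw [hC.value_eq hT hu0 hu1 hu2 (fun e => hu3 _) hzT w hw, Finset.sum_eq_zero, add_zero]
  · intro x hx
    simp only [Finset.mem_filter, Finset.mem_univ, true_and] at hx
    have h1 := height_mono (u := u) (D.nodeDepth_lt hT) hC.near x hx.1
    rw [hx.2, hw] at h1
    rw [le_antisymm (hle x) h1]; ring
  · intro w' hw' hp
    have := D.depth_lt hw'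
    rw [hp] at this
    exact (hle _).trans_lt this

/-- Every point at distance `t` along the edge or ray leading to the node `x`, short of `x` itself, is
a value. On a ray, `T` can be taken as large as needed. -/
lemma Centers.exists_edge (hC : D.Centers v q a) [IsAlgClosed K] (hsurj : ∀ a : ℚ, ∃ x : K, v x = a)
    (B : Finset K) (x : Node V E) (hx : x ≠ vert D.root) (t : ℚ) (ht : 0 ≤ t)
    (htx : ∃ T : ℚ, D.depth (D.nodePar x) + t < D.nodeDepth T x) :
    ∃ u, u ∉ B ∧ u ≠ 0 ∧ 0 ≤ ratVal v u ∧ ratVal v u < D.period ∧ (∀ e, u ≠ a (leaf e)) ∧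
      ∀ i, D.value v (fun e => a (leaf e)) u i = D.pos (D.nodePar x) i + t * D.nodeSlope x i := by
  set w := D.nodePar x with hwdef
  have hr : 0 ≤ D.depth w + t := add_nonneg (D.depth_nonneg w) ht
  obtain ⟨T₀, hT₀⟩ := htx
  obtain ⟨u, huB, hu0, hu1, hu2, hu3, hu⟩ := hC.exists_generic_point hsurj B x (D.depth w + t)
    hr (by
      rcases x with _ | w' | e
      · exact Or.inl hT₀
      · by_cases hc : D.circ w'
        · exact Or.inl (hT₀.trans (D.depth_lt_period hc))
        · right; rw [hC.val_vert w' hc]; exact_mod_cast depth_anchor_lt_period w'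
      · right; rw [hC.val_leaf e]; exact_mod_cast depth_anchor_lt_period _)
  have hT : 0 < D.depth w + t + 1 := by linarith
  have hle : ∀ y, v (u - a y) ≤ (D.depth w + t : ℚ) := fun y => by
    rw [hu]; exact min_le_left _ _
  have hzT : ∀ e, ratVal v (u - a (leaf e)) < D.depth w + t + 1 := by
    intro e
    have := hle (leaf e)
    rw [← coe_ratVal v (sub_ne_zero.mpr (hu3 _)), WithTop.coe_le_coe] at this
    linarith
  set T := D.depth w + t + 1 with hTdef
  have hlt : D.depth w + t < D.nodeDepth T x := by
    rcases x with _ | w' | e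
    · exact hT₀
    · exact hT₀
    · have := D.depth_nonneg (D.src e)
      simp only [nodeDepth]; linarith
  refine ⟨u, huB, hu0, hu1, hu2, fun e => hu3 _, fun i => ?_⟩
  have hnear := hC.near x hx
  rw [← hwdef] at hnear
  have hw : height v a (D.nodeDepth T) u (vert w) = D.depth w := by
    apply height_eq_depth
    rw [hu]
    exact le_min (by exact_mod_cast (by linarith : D.depth w ≤ D.depth w + t)) hnear
  have hmx : height v a (D.nodeDepth T) u x = D.depth w + t := by
    refine height_eq ?_ hlt.le
    rw [hu, sub_self, v.map_zero, min_eq_left le_top]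
  have hmy : ∀ y, y ≠ vert D.root → D.nodePar y = w → y ≠ x →
      height v a (D.nodeDepth T) u y = D.depth w := by
    intro y hy hyw hyx
    refine height_eq ?_ ?_
    · rw [hu, hC.sib x y hx hy hyx.symm hyw.symm, ← hwdef, min_eq_right]
      exact_mod_cast (by linarith : D.depth w ≤ D.depth w + t)
    · have := D.nodeDepth_lt hT y hy
      rw [hyw] at this
      exact this.le
  rw [hC.value_eq hT hu0 hu1 hu2 (fun e => hu3 _) hzT w hw, Finset.sum_eq_single x]
  · rw [hmx]; ring
  · intro y hy hyx
    simp only [Finset.mem_filter, Finset.mem_univ, true_and] at hy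
    rw [hmy y hy.1 (by simpa using hy.2) hyx]; ring
  · intro h; exact absurd (Finset.mem_filter.mpr ⟨Finset.mem_univ _, hx, rfl⟩) h
  · intro w' hw' hp
    have hw'' : (vert w' : Node V E) ≠ vert D.root := by simpa using hw'
    by_cases h : vert w' = x
    · rw [h, hmx]
      subst h
      exact hlt
    · rw [hmy _ hw'' hp h, ← hp]
      exact D.depth_lt hw'

/-- Every point of the curve is a value at some `u` of the annulus outside a given finite set `B`,
which allows for avoiding the auxiliary zeros and poles. -/
lemma Centers.exists_of_mem_image (hC : D.Centers v q a) [IsAlgClosed K] (hsurj : ∀ a : ℚ, ∃ x : K, v x = a)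
    (B : Finset K) {p : Fin n → ℚ} (hp : p ∈ D.Image) :
    ∃ u, u ∉ B ∧ u ≠ 0 ∧ 0 ≤ ratVal v u ∧ ratVal v u < D.period ∧ (∀ e, u ≠ a (leaf e)) ∧
      D.value v (fun e => a (leaf e)) u = p := by
  rcases hp with ⟨w, t, ht, htl, hp⟩ | ⟨e, t, ht, hp⟩
  · rcases htl.lt_or_eq with hlt | rfl
    · by_cases hw : w = D.root
      · obtain ⟨u, h1, h2, h3, h4, h5, h6⟩ := hC.exists_edge hsurj B none (by simp) t ht
          ⟨0, by subst hw; simp only [nodePar, nodeDepth, period]; linarith⟩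
        refine ⟨u, h1, h2, h3, h4, h5, funext fun i => ?_⟩
        rw [h6, hp, hw]; rfl
      · obtain ⟨u, h1, h2, h3, h4, h5, h6⟩ := hC.exists_edge hsurj B (vert w) (by simpa using hw)
          t ht ⟨0, by
            have := D.depth_of_ne hw
            simp only [nodePar, nodeDepth]; linarith⟩
        refine ⟨u, h1, h2, h3, h4, h5, funext fun i => ?_⟩
        rw [h6, hp]; rfl
    · obtain ⟨u, h1, h2, h3, h4, h5, h6⟩ := hC.exists_vertex hsurj B w
      refine ⟨u, h1, h2, h3, h4, h5, funext fun i => ?_⟩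
      rw [h6, hp]; linarith [D.pos_sub w i]
  · obtain ⟨u, h1, h2, h3, h4, h5, h6⟩ := hC.exists_edge hsurj B (leaf e) (by simp) t ht
      ⟨t + 1, by simp only [nodePar, nodeDepth]; linarith⟩
    refine ⟨u, h1, h2, h3, h4, h5, funext fun i => ?_⟩
    rw [h6, hp]; rfl

lemma Centers.leaf_injective (hC : D.Centers v q a) : Function.Injective fun e : E => a (leaf e) := by
  intro e f hef
  replace hef : a (leaf e) = a (leaf f) := hef
  have hvu : 0 ≤ v (a (leaf e)) := hC.val_nonneg _
  have hmax : ∀ e', a (leaf e) = a (leaf e') →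
      height v a (D.nodeDepth 1) (a (leaf e)) (leaf e') = D.nodeDepth 1 (leaf e') := by
    intro e' h
    apply height_eq_depth
    rw [h, sub_self, v.map_zero]; exact le_top
  have hno : ∀ e' (x : Node V E), x ≠ vert D.root → (vert (D.nodePar x) : Node V E) = leaf e' →
      height v a (D.nodeDepth 1) (a (leaf e)) x < D.nodeDepth 1 x := by
    intro e' x _ h
    simp at h
  have := tree_leaf_unique (vert D.root) (fun x => vert (D.nodePar x)) (D.nodeDepth 1)
    (height v a (D.nodeDepth 1) (a (leaf e)))
    (D.nodeDepth_lt one_pos) (hC.height_root 1 hvu) height_le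
    (height_leave (D.nodeDepth_lt one_pos) hC.near)
    (height_sib (hC.sib_depth 1)) (leaf e) (leaf f) (hmax e rfl) (hno e) (hmax f hef) (hno f)
  simpa using this

end Unicyclic

/-! ### Theta quotients -/

section Tate

variable {K : Type*} [Field K] (v : AddValuation K (WithTop ℚ))

/-- `θ` is the Tate theta function `Θ₁` off `q^ℤ`. Along with the limit defining it, its functional
equation and its valuation on `-v q < v x < v q` are recorded. The values of `θ` on `q^ℤ` are
unconstrained. -/
def IsTheta (q : K) (θ : K → K) : Prop :=
  ∀ x, x ≠ 0 → (∀ j : ℤ, x ≠ q ^ j) →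
    θ x ≠ 0 ∧ VTendsto v (thetaPart q x) (θ x) ∧ θ (q * x) = -x⁻¹ * θ x ∧
    (-ratVal v q < ratVal v x → ratVal v x < ratVal v q → ratVal v (θ x) = ratVal v (1 - x))

variable {v} {q : K} {θ : K → K}

lemma orbit_quot {u z : K} (hz : z ≠ 0) (h : ∀ j : ℤ, u ≠ q ^ j * z) (j : ℤ) : u / z ≠ q ^ j :=
  fun e => h j ((div_eq_iff hz).mp e)

lemma IsTheta.ne_zero (hθ : IsTheta v q θ) {u z : K} (hu : u ≠ 0) (hz : z ≠ 0)
    (h : ∀ j : ℤ, u ≠ q ^ j * z) : θ (u / z) ≠ 0 :=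
  (hθ _ (div_ne_zero hu hz) (orbit_quot hz h)).1

lemma IsTheta.shift (hθ : IsTheta v q θ) {u z : K} (hu : u ≠ 0) (hz : z ≠ 0)
    (h : ∀ j : ℤ, u ≠ q ^ j * z) : θ (q * u / z) = -(z / u) * θ (u / z) := by
  rw [mul_div_assoc, (hθ _ (div_ne_zero hu hz) (orbit_quot hz h)).2.2.1, inv_div]

lemma IsTheta.ratVal_shift (hθ : IsTheta v q θ) (hq : q ≠ 0) {u z : K} (hu : u ≠ 0) (hz : z ≠ 0)
    (h : ∀ j : ℤ, u ≠ q ^ j * z) :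
    ratVal v (θ (u / (q * z))) = ratVal v (θ (u / z)) + ratVal v u - ratVal v q - ratVal v z := by
  have h' : ∀ j : ℤ, u ≠ q ^ j * (q * z) := fun j => by
    rw [← mul_assoc, ← zpow_add_one₀ hq]; exact h _
  have h1 := hθ.shift hu (mul_ne_zero hq hz) h'
  rw [mul_div_mul_left _ _ hq] at h1
  rw [h1, ratVal_mul v (neg_ne_zero.mpr (div_ne_zero (mul_ne_zero hq hz) hu))
    (hθ.ne_zero hu (mul_ne_zero hq hz) h'), ratVal_neg, ratVal_div v (mul_ne_zero hq hz) hu,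
    ratVal_mul v hq hz]
  ring

/-- For `u` and `z` both in the annulus `0 ≤ v < v q`, the theta function `Θ_z` has the same valuation
at `u` as its factor `1 - u / z`. -/
lemma IsTheta.ratVal_eq (hθ : IsTheta v q θ) {u z : K} (hu : u ≠ 0) (hz : z ≠ 0)
    (h : ∀ j : ℤ, u ≠ q ^ j * z) (hu1 : 0 ≤ ratVal v u) (hu2 : ratVal v u < ratVal v q)
    (hz1 : 0 ≤ ratVal v z) (hz2 : ratVal v z < ratVal v q) :
    ratVal v (θ (u / z)) = ratVal v (u - z) - ratVal v z := by
  have hne : u - z ≠ 0 := sub_ne_zero.mpr (by simpa using h 0)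
  have hr := ratVal_div v hu hz
  rw [(hθ _ (div_ne_zero hu hz) (orbit_quot hz h)).2.2.2 (by linarith) (by linarith),
    ← ratVal_div v hne hz, ← ratVal_neg]
  congr 1
  field_simp
  ring

/-- The theta function `Θ_z(u) = Θ₁(u / z)`, with zeros `q^ℤ z`. -/
def thetaAt (θ : K → K) (z u : K) : K := θ (u / z)

lemma IsTheta.prod_shift (hθ : IsTheta v q θ) {u : K} (hu : u ≠ 0) (Z : Multiset K)
    (hZ : ∀ z ∈ Z, z ≠ 0) (h : ∀ j : ℤ, ∀ z ∈ Z, u ≠ q ^ j * z) :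
    (Z.map fun z => thetaAt θ z (q * u)).prod =
      (-u⁻¹) ^ Multiset.card Z * Z.prod * (Z.map fun z => thetaAt θ z u).prod := by
  induction Z using Multiset.induction_on with
  | empty => simp
  | cons z Z ih =>
    rw [Multiset.map_cons, Multiset.prod_cons, ih (fun z hz => hZ z (Multiset.mem_cons_of_mem hz))
      (fun j z hz => h j z (Multiset.mem_cons_of_mem hz)), Multiset.map_cons, Multiset.prod_cons,
      Multiset.card_cons, Multiset.prod_cons, thetaAt, hθ.shift hu (hZ z (Multiset.mem_cons_self _ _))
      (fun j => h j z (Multiset.mem_cons_self _ _)), thetaAt]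
    ring

/-- A theta quotient of degree `0` whose zeros and poles have equal products is `q`-periodic. -/
lemma phiVal_shift (hθ : IsTheta v q θ) {u : K} (hu : u ≠ 0) (Zp Zm : Multiset K)
    (hZp : ∀ z ∈ Zp, z ≠ 0) (hp : ∀ j : ℤ, ∀ z ∈ Zp, u ≠ q ^ j * z)
    (hZm : ∀ z ∈ Zm, z ≠ 0) (hm : ∀ j : ℤ, ∀ z ∈ Zm, u ≠ q ^ j * z)
    (hcard : Multiset.card Zp = Multiset.card Zm) (hprod : Zp.prod = Zm.prod) :
    phiVal (thetaAt θ) Zp Zm (q * u) = phiVal (thetaAt θ) Zp Zm u := by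
  rw [phiVal, phiVal, hθ.prod_shift hu Zp hZp hp, hθ.prod_shift hu Zm hZm hm, hcard, hprod]
  refine mul_div_mul_left _ _ (mul_ne_zero (pow_ne_zero _ (neg_ne_zero.mpr (inv_ne_zero hu))) ?_)
  exact Multiset.prod_ne_zero fun h => hZm 0 h rfl

variable {n : ℕ} {Zp Zm : Fin n → Multiset K}

lemma TateDom.zpow_mul (hq : q ≠ 0) {u : K} (h : TateDom q Zp Zm u) (k : ℤ) :
    TateDom q Zp Zm (q ^ k * u) := by
  have key : ∀ (j : ℤ) (z : K), q ^ k * u = q ^ j * z → u = q ^ (j - k) * z := by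
    intro j z e
    apply mul_left_cancel₀ (zpow_ne_zero k hq)
    rw [e, ← mul_assoc, ← zpow_add₀ hq]
    congr 2
    ring
  exact ⟨mul_ne_zero (zpow_ne_zero k hq) h.1, fun j i =>
    ⟨fun z hz e => (h.2 (j - k) i).1 z hz (key j z e),
      fun z hz e => (h.2 (j - k) i).2 z hz (key j z e)⟩⟩

lemma phiVal_zpow (hq : q ≠ 0) {Θ : K → K → K}
    (hper : ∀ u, TateDom q Zp Zm u → ∀ i, phiVal Θ (Zp i) (Zm i) (q * u) = phiVal Θ (Zp i) (Zm i) u)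
    {u : K} (hu : TateDom q Zp Zm u) (k : ℤ) (i : Fin n) :
    phiVal Θ (Zp i) (Zm i) (q ^ k * u) = phiVal Θ (Zp i) (Zm i) u := by
  induction k using Int.induction_on with
  | zero => simp
  | succ k ih =>
    rw [← ih, ← hper _ (hu.zpow_mul hq k), ← mul_assoc, mul_comm q, zpow_add_one₀ hq]
  | pred k ih =>
    rw [← ih, ← hper _ (hu.zpow_mul hq _), ← mul_assoc, mul_comm q, ← zpow_add_one₀ hq,
      sub_add_cancel]

/-- Every `q^ℤ`-orbit meets the annulus `0 ≤ v x < v q`. -/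
lemma exists_zpow_mul (hq : q ≠ 0) (hqv : 0 < ratVal v q) {x : K} (hx : x ≠ 0) :
    ∃ j : ℤ, 0 ≤ ratVal v (q ^ j * x) ∧ ratVal v (q ^ j * x) < ratVal v q := by
  refine ⟨-⌊ratVal v x / ratVal v q⌋, ?_⟩
  rw [ratVal_mul v (zpow_ne_zero _ hq) hx, ratVal_zpow v hq]
  have h1 := Int.floor_le (ratVal v x / ratVal v q)
  have h2 := Int.lt_floor_add_one (ratVal v x / ratVal v q)
  rw [le_div_iff₀ hqv] at h1
  rw [div_lt_iff₀ hqv] at h2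
  push_cast
  constructor <;> linarith

/-- A `q^ℤ`-orbit meets the annulus `0 ≤ v x < v q` at most once. -/
lemma eq_of_orbit (hq : q ≠ 0) (hqv : 0 < ratVal v q) {x y : K} (hy : y ≠ 0)
    (hx1 : 0 ≤ ratVal v x) (hx2 : ratVal v x < ratVal v q)
    (hy1 : 0 ≤ ratVal v y) (hy2 : ratVal v y < ratVal v q) {j : ℤ} (h : x = q ^ j * y) :
    x = y := by
  have h1 := congrArg (ratVal v) h
  rw [ratVal_mul v (zpow_ne_zero _ hq) hy, ratVal_zpow v hq] at h1
  have h2 : (j : ℚ) < 1 := by by_contra hj; push Not at hj; nlinarith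
  have h3 : (-1 : ℚ) < j := by by_contra hj; push Not at hj; nlinarith
  have h4 : j < 1 := by exact_mod_cast h2
  have h5 : -1 < j := by exact_mod_cast h3
  have : j = 0 := by omega
  rw [h, this]; simp

end Tate

/-! ### The multisets of zeros and poles -/

namespace Unicyclic

variable {V E : Type} [Fintype V] [Fintype E] {n : ℕ} (D : Unicyclic V E n)
variable {K : Type*} [Field K] (q : K) (z : E → K) (w : Fin n → K)

/-- The multiset `Z_i^+`. The point `z e` is a zero of multiplicity `out e i`, or a pole if this is
negative. The other points do not affect the order vectors, since they come in pairs from the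
same orbit: up to constants `Θ_q / Θ_1` is `u`, so `slope root i` copies of it give the monomial
`u ^ slope root i`, and the factor `(Θ_q / Θ_1) * (Θ_w / Θ_{q w})` with `w = w i` is constant, of
valuation `v (w i)`. -/
noncomputable def zeros (i : Fin n) : Multiset K :=
  ∑ e, (D.out e i).toNat • {z e}
    + ((D.slope D.root i).toNat • {q} + (-D.slope D.root i).toNat • {1}) + ({q} + {w i})

/-- The multiset `Z_i^-`, see `zeros`. -/
noncomputable def poles (i : Fin n) : Multiset K :=
  ∑ e, (-D.out e i).toNat • {z e}
    + ((D.slope D.root i).toNat • {1} + (-D.slope D.root i).toNat • {q}) + ({1} + {q * w i})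

lemma toNat_zsmul {A : Type*} [AddCommGroup A] (k : ℤ) (x : A) :
    k.toNat • x - (-k).toNat • x = k • x := by
  rw [← natCast_zsmul, ← natCast_zsmul, ← sub_smul, Int.toNat_sub_toNat_neg]

/-- The difference of an additive functional on the zeros and on the poles. This gives the degree,
the order vectors and the valuation of the theta quotient all at once. -/
lemma hom_zeros_sub_poles {A : Type*} [AddCommGroup A] (F : Multiset K →+ A) (i : Fin n) :
    F (D.zeros q z w i) - F (D.poles q z w i) = ∑ e, D.out e i • F {z e}
      + D.slope D.root i • (F {q} - F {1}) + (F {q} - F {1}) + (F {w i} - F {q * w i}) := by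
  simp only [zeros, poles, map_add, map_sum, map_nsmul, ← toNat_zsmul (D.out _ i),
    ← toNat_zsmul (D.slope D.root i), Finset.sum_sub_distrib, smul_sub]
  abel

lemma mem_cases (i : Fin n) {x : K} (hx : x ∈ D.zeros q z w i ∨ x ∈ D.poles q z w i) :
    (∃ e, x = z e) ∨ x = q ∨ x = 1 ∨ x = w i ∨ x = q * w i := by
  have hsum : ∀ c : E → ℕ, x ∈ ∑ e, c e • ({z e} : Multiset K) → ∃ e, x = z e := by
    intro c h
    obtain ⟨e, -, he⟩ := Multiset.mem_sum.mp h
    exact ⟨e, Multiset.mem_singleton.mp (Multiset.mem_of_mem_nsmul he)⟩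
  have hs : ∀ (k : ℕ) (y : K), x ∈ k • ({y} : Multiset K) → x = y := fun k y h =>
    Multiset.mem_singleton.mp (Multiset.mem_of_mem_nsmul h)
  simp only [zeros, poles, Multiset.mem_add, Multiset.mem_singleton] at hx
  rcases hx with ((h | h | h) | h | h) | ((h | h | h) | h | h)
  · exact Or.inl (hsum _ h)
  · exact Or.inr (Or.inl (hs _ _ h))
  · exact Or.inr (Or.inr (Or.inl (hs _ _ h)))
  · exact Or.inr (Or.inl h)
  · exact Or.inr (Or.inr (Or.inr (Or.inl h)))
  · exact Or.inl (hsum _ h)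
  · exact Or.inr (Or.inr (Or.inl (hs _ _ h)))
  · exact Or.inr (Or.inl (hs _ _ h))
  · exact Or.inr (Or.inr (Or.inl h))
  · exact Or.inr (Or.inr (Or.inr (Or.inr h)))

lemma leaf_mem {e : E} {i : Fin n} (h : D.out e i ≠ 0) :
    z e ∈ D.zeros q z w i ∨ z e ∈ D.poles q z w i := by
  have key : ∀ c : E → ℕ, c e ≠ 0 → z e ∈ ∑ e, c e • ({z e} : Multiset K) := fun c hc =>
    Multiset.mem_sum.mpr ⟨e, Finset.mem_univ e, by
      rw [Multiset.mem_nsmul]; exact ⟨hc, Multiset.mem_singleton_self _⟩⟩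
  rcases lt_or_gt_of_ne h with h | h
  · right
    exact Multiset.mem_add.mpr (Or.inl (Multiset.mem_add.mpr (Or.inl (key _ (by omega)))))
  · left
    exact Multiset.mem_add.mpr (Or.inl (Multiset.mem_add.mpr (Or.inl (key _ (by omega)))))

lemma card_zeros (i : Fin n) :
    Multiset.card (D.zeros q z w i) = Multiset.card (D.poles q z w i) := by
  have h := D.hom_zeros_sub_poles q z w
    ((Nat.castAddMonoidHom ℤ).comp Multiset.cardHom) i
  simp only [AddMonoidHom.comp_apply, Multiset.cardHom_apply, Multiset.card_singleton, sub_self,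
    smul_zero, add_zero] at h
  have h' : ((Multiset.card (D.zeros q z w i) : ℤ)) - Multiset.card (D.poles q z w i) = 0 := by
    refine h.trans ?_
    simpa using D.sum_out i
  omega

lemma zpow_toNat {x : K} (hx : x ≠ 0) (k : ℤ) : x ^ k.toNat = x ^ k * x ^ (-k).toNat := by
  rw [← zpow_natCast, ← zpow_natCast, ← zpow_add₀ hx]
  congr 1
  omega

lemma prod_zeros (hq : q ≠ 0) (hz : ∀ e, z e ≠ 0)
    (h : ∀ i, ∏ e, z e ^ D.out e i = q ^ (-D.slope D.root i)) (i : Fin n) :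
    (D.zeros q z w i).prod = (D.poles q z w i).prod := by
  simp only [zeros, poles, Multiset.prod_add, Multiset.prod_sum, Multiset.prod_nsmul,
    Multiset.prod_singleton, one_pow, mul_one, one_mul]
  rw [zpow_toNat hq]
  simp only [fun e => zpow_toNat (hz e) (D.out e i)]
  rw [Finset.prod_mul_distrib, h]
  have : q ^ (-D.slope D.root i) * q ^ D.slope D.root i = 1 := by
    rw [← zpow_add₀ hq, neg_add_cancel, zpow_zero]
  linear_combination (∏ e, z e ^ (-D.out e i).toNat) * q ^ (-D.slope D.root i).toNat *
    (q * w i) * this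

/-- The auxiliary zeros and poles cancel in the order vectors, so only the points `z e` count. -/
lemma orbVec_eq (hq : q ≠ 0) (x : K) (i : Fin n) :
    orbVec q (D.zeros q z w) (D.poles q z w) x i =
      ∑ e, D.out e i * if ∃ j : ℤ, z e = q ^ j * x then 1 else 0 := by
  have h := D.hom_zeros_sub_poles q z w
    ((Nat.castAddMonoidHom ℤ).comp
      (Multiset.countPAddMonoidHom fun y => ∃ j : ℤ, y = q ^ j * x)) i
  have hs : ∀ y, ((Nat.castAddMonoidHom ℤ).comp
      (Multiset.countPAddMonoidHom fun y => ∃ j : ℤ, y = q ^ j * x)) {y} =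
      if ∃ j : ℤ, y = q ^ j * x then 1 else 0 := by
    intro y
    simp only [AddMonoidHom.comp_apply, Multiset.coe_countPAddMonoidHom]
    rw [← Multiset.cons_zero, Multiset.countP_cons]
    split_ifs <;> simp
  have hqy : ∀ y, (∃ j : ℤ, q * y = q ^ j * x) ↔ ∃ j : ℤ, y = q ^ j * x := by
    intro y
    constructor
    · rintro ⟨j, hj⟩
      refine ⟨j - 1, mul_left_cancel₀ hq ?_⟩
      rw [hj, ← mul_assoc, ← zpow_one_add₀ hq]
      congr 2; ring
    · rintro ⟨j, hj⟩
      exact ⟨1 + j, by rw [hj, ← mul_assoc, zpow_one_add₀ hq]⟩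
  have h1 := hqy 1
  rw [mul_one] at h1
  simp only [hs, hqy, h1, sub_self, mul_zero, add_zero, smul_eq_mul] at h
  exact h

variable {q z w} {v : AddValuation K (WithTop ℚ)}

/-- The valuation of the theta quotient on the annulus `0 ≤ v u < v q` is `value`. -/
lemma val_phi (hq : q ≠ 0) (hz : ∀ e, z e ≠ 0)
    (hz1 : ∀ e, 0 ≤ ratVal v (z e)) (hz2 : ∀ e, ratVal v (z e) < ratVal v q)
    (hprod : ∀ i, ∏ e, z e ^ D.out e i = q ^ (-D.slope D.root i))
    (hw0 : ∀ i, w i ≠ 0) (hw : ∀ i, ratVal v (w i) = D.pos D.root i)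
    {θ : K → K} (hθ : IsTheta v q θ) {u : K} (hu : TateDom q (D.zeros q z w) (D.poles q z w) u)
    (huz : ∀ e (j : ℤ), u ≠ q ^ j * z e)
    (hu1 : 0 ≤ ratVal v u) (hu2 : ratVal v u < ratVal v q) (i : Fin n) :
    v (phiVal (thetaAt θ) (D.zeros q z w i) (D.poles q z w i) u) = (D.value v z u i : WithTop ℚ) := by
  have hne : ∀ x, x ∈ D.zeros q z w i ∨ x ∈ D.poles q z w i → x ≠ 0 := by
    intro x hx
    rcases D.mem_cases q z w i hx with ⟨e, rfl⟩ | rfl | rfl | rfl | rfl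
    exacts [hz e, hq, one_ne_zero, hw0 i, mul_ne_zero hq (hw0 i)]
  have hrat : ∀ Z : Multiset K, (∀ x ∈ Z, thetaAt θ x u ≠ 0) →
      (Z.map fun x => thetaAt θ x u).prod ≠ 0 ∧
      ratVal v (Z.map fun x => thetaAt θ x u).prod = (Z.map fun x => ratVal v (thetaAt θ x u)).sum := by
    intro Z
    induction Z using Multiset.induction_on with
    | empty => intro _; simp [ratVal_one]
    | cons x Z ih =>
      intro h
      obtain ⟨h1, h2⟩ := ih fun y hy => h y (Multiset.mem_cons_of_mem hy)
      have h3 := h x (Multiset.mem_cons_self _ _)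
      simp only [Multiset.map_cons, Multiset.prod_cons, Multiset.sum_cons]
      exact ⟨mul_ne_zero h3 h1, by rw [ratVal_mul v h3 h1, h2]⟩
  obtain ⟨hp0, hp⟩ := hrat (D.zeros q z w i) fun x hx =>
    hθ.ne_zero hu.1 (hne x (Or.inl hx)) fun j => (hu.2 j i).1 x hx
  obtain ⟨hm0, hm⟩ := hrat (D.poles q z w i) fun x hx =>
    hθ.ne_zero hu.1 (hne x (Or.inr hx)) fun j => (hu.2 j i).2 x hx
  have h := D.hom_zeros_sub_poles q z w
    (Multiset.sumAddMonoidHom.comp (Multiset.mapAddMonoidHom fun x => ratVal v (thetaAt θ x u))) i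
  simp only [AddMonoidHom.comp_apply, Multiset.coe_sumAddMonoidHom, Multiset.coe_mapAddMonoidHom,
    Multiset.map_singleton, Multiset.sum_singleton] at h
  have h1 : ratVal v (thetaAt θ q u) = ratVal v (thetaAt θ 1 u) + ratVal v u - ratVal v q := by
    have := hθ.ratVal_shift hq hu.1 one_ne_zero
      (fun j => (hu.2 j i).2 1 (by simp [poles]))
    rw [mul_one, ratVal_one] at this
    simp only [thetaAt]
    linarith
  have h2 := hθ.ratVal_shift hq hu.1 (hw0 i) (fun j => (hu.2 j i).1 (w i) (by simp [zeros]))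
  have h3 : ∀ e, ratVal v (thetaAt θ (z e) u) = ratVal v (u - z e) - ratVal v (z e) := fun e =>
    hθ.ratVal_eq hu.1 (hz e) (huz e) hu1 hu2 (hz1 e) (hz2 e)
  have h4 : ∑ e, (D.out e i : ℚ) * ratVal v (z e) = -(D.slope D.root i : ℚ) * ratVal v q := by
    have := congrArg (ratVal v) (hprod i)
    rw [ratVal_prod v _ _ (fun e _ => zpow_ne_zero _ (hz e)), ratVal_zpow v hq] at this
    simp only [fun e => ratVal_zpow v (hz e)] at this
    rw [this]; push_cast; ring
  rw [phiVal, ← coe_ratVal v (div_ne_zero hp0 hm0), WithTop.coe_inj, ratVal_div v hp0 hm0, hp, hm, h,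
    value]
  simp only [h3, zsmul_eq_mul, mul_sub, Finset.sum_sub_distrib, h4, ← hw]
  simp only [thetaAt] at h1 h2 ⊢
  rw [h1, h2]
  ring

end Unicyclic

/-! ### The lift -/

namespace Unicyclic

variable {V E : Type} [Fintype V] [Fintype E] {n : ℕ} (D : Unicyclic V E n)
variable {K : Type*} [Field K] [IsAlgClosed K] (v : AddValuation K (WithTop ℚ))

/-- The lift of a unicyclic curve. Each ray `e` gives a point `z e`; these are pairwise inequivalent
under `q^ℤ`, and the order vector at `z e` is `out e`. -/
theorem exists_lift (hout : ∀ e, D.out e ≠ 0) (hsurj : ∀ a : ℚ, ∃ x : K, v x = a)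
    (hcomplete : ∀ x : ℕ → K,
      (∀ M : ℚ, ∃ N : ℕ, ∀ m₁ ≥ N, ∀ m₂ ≥ N, (M : WithTop ℚ) ≤ v (x m₁ - x m₂)) →
      ∃ L : K, VTendsto v x L) :
    ∃ (q : K) (θ : K → K) (z : E → K) (w : Fin n → K) (reps : Finset K),
      q ≠ 0 ∧ 0 < ratVal v q ∧ IsTheta v q θ ∧ (∀ e, z e ≠ 0) ∧ (∀ i, w i ≠ 0) ∧
      (∀ i, ∏ e, z e ^ D.out e i = q ^ (-D.slope D.root i)) ∧
      (fun u i => v (phiVal (thetaAt θ) (D.zeros q z w i) (D.poles q z w i) u)) ''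
          {u | TateDom q (D.zeros q z w) (D.poles q z w) u}
        = (fun p : Fin n → ℚ => fun i => ((p i : ℚ) : WithTop ℚ)) '' D.Image ∧
      (∀ x ∈ reps, x ≠ 0) ∧
      (∀ x ∈ reps, ∀ y ∈ reps, x ≠ y → ∀ j : ℤ, x ≠ q ^ j * y) ∧
      (∀ i, ∀ y : K, (y ∈ D.zeros q z w i ∨ y ∈ D.poles q z w i) →
        ∃ x ∈ reps, ∃ j : ℤ, y = q ^ j * x) ∧
      Function.Injective z ∧ (∀ e, z e ∈ reps) ∧
      (∀ e, orbVec q (D.zeros q z w) (D.poles q z w) (z e) = D.out e) ∧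
      ∀ x ∈ reps, (∀ e, x ≠ z e) → orbVec q (D.zeros q z w) (D.poles q z w) x = 0 := by
  obtain ⟨q, hqv⟩ := hsurj D.period
  have hq : q ≠ 0 := ne_zero_of_val v hqv
  replace hqv : ratVal v q = D.period := ratVal_eq v hqv
  have hqpos : 0 < ratVal v q := hqv ▸ D.period_pos
  obtain ⟨θ, hθ⟩ := exists_theta hcomplete hq hqpos
  replace hθ : IsTheta v q θ := hθ
  obtain ⟨a, hC⟩ := D.exists_centers v hsurj hq hqv
  set z : E → K := fun e => a (leaf e) with hzdef
  have hzv : ∀ e, ratVal v (z e) = D.depth (D.anchor (D.src e)) := fun e =>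
    ratVal_eq v (hC.val_leaf e)
  have hz : ∀ e, z e ≠ 0 := fun e => ne_zero_of_val v (hC.val_leaf e)
  have hz1 : ∀ e, 0 ≤ ratVal v (z e) := fun e => by rw [hzv]; exact D.depth_nonneg _
  have hz2 : ∀ e, ratVal v (z e) < ratVal v q := fun e => by
    rw [hzv, hqv]; exact depth_anchor_lt_period _
  choose w hw using fun i => hsurj (D.pos D.root i)
  have hw0 : ∀ i, w i ≠ 0 := fun i => ne_zero_of_val v (hw i)
  replace hw : ∀ i, ratVal v (w i) = D.pos D.root i := fun i => ratVal_eq v (hw i)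
  -- The `w' i` are the representatives of the `w i` in the annulus `0 ≤ v x < v q`. Together with `1`
  -- and the `z e`, they represent all zeros and poles.
  choose k hk1 hk2 using fun i => exists_zpow_mul hq hqpos (hw0 i)
  set w' : Fin n → K := fun i => q ^ k i * w i with hw'
  have hww' : ∀ i, w i = q ^ (-k i) * w' i := fun i => by
    simp only [hw']; rw [← mul_assoc, ← zpow_add₀ hq]; simp
  have hw'0 : ∀ i, w' i ≠ 0 := fun i => mul_ne_zero (zpow_ne_zero _ hq) (hw0 i)
  have hcard := D.card_zeros q z w
  have hprod := D.prod_zeros q z w hq hz hC.prod_leaf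
  have hne : ∀ i x, x ∈ D.zeros q z w i ∨ x ∈ D.poles q z w i → x ≠ 0 := by
    intro i x hx
    rcases D.mem_cases q z w i hx with ⟨e, rfl⟩ | rfl | rfl | rfl | rfl
    exacts [hz e, hq, one_ne_zero, hw0 i, mul_ne_zero hq (hw0 i)]
  have hper : ∀ u, TateDom q (D.zeros q z w) (D.poles q z w) u → ∀ i,
      phiVal (thetaAt θ) (D.zeros q z w i) (D.poles q z w i) (q * u) =
      phiVal (thetaAt θ) (D.zeros q z w i) (D.poles q z w i) u := fun u hu i =>
    phiVal_shift hθ hu.1 _ _ (fun x hx => hne i x (Or.inl hx)) (fun j => (hu.2 j i).1)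
      (fun x hx => hne i x (Or.inr hx)) (fun j => (hu.2 j i).2) (hcard i) (hprod i)
  set B : Finset K := insert 1 (Finset.univ.image w') with hB
  have hBfund : ∀ x ∈ B, x ≠ 0 ∧ 0 ≤ ratVal v x ∧ ratVal v x < ratVal v q := by
    intro x hx
    rcases Finset.mem_insert.mp hx with rfl | hx
    · rw [ratVal_one]; exact ⟨one_ne_zero, le_rfl, hqpos⟩
    · obtain ⟨i, -, rfl⟩ := Finset.mem_image.mp hx
      exact ⟨hw'0 i, hk1 i, hk2 i⟩
  have hfund : ∀ x ∈ B ∪ Finset.univ.image z, x ≠ 0 ∧ 0 ≤ ratVal v x ∧ ratVal v x < ratVal v q := by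
    intro x hx
    rcases Finset.mem_union.mp hx with hx | hx
    · exact hBfund x hx
    · obtain ⟨e, -, rfl⟩ := Finset.mem_image.mp hx
      exact ⟨hz e, hz1 e, hz2 e⟩
  have hcov : ∀ i, ∀ y : K, (y ∈ D.zeros q z w i ∨ y ∈ D.poles q z w i) →
      ∃ x ∈ B ∪ Finset.univ.image z, ∃ j : ℤ, y = q ^ j * x := by
    intro i y hy
    have h1 : (1 : K) ∈ B ∪ Finset.univ.image z := by simp [hB]
    have h2 : w' i ∈ B ∪ Finset.univ.image z := by simp [hB]
    rcases D.mem_cases q z w i hy with ⟨e, rfl⟩ | rfl | rfl | rfl | rfl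
    · exact ⟨z e, by simp, 0, by simp⟩
    · exact ⟨1, h1, 1, by simp⟩
    · exact ⟨1, h1, 0, by simp⟩
    · exact ⟨w' i, h2, -k i, hww' i⟩
    · refine ⟨w' i, h2, 1 + -k i, ?_⟩
      rw [zpow_add₀ hq, zpow_one, mul_assoc, ← hww' i]
  have huniq : ∀ x ∈ B ∪ Finset.univ.image z, ∀ y, 0 ≤ ratVal v y → ratVal v y < ratVal v q →
      ∀ j : ℤ, y = q ^ j * x → y = x := fun x hx y hy1 hy2 j h =>
    eq_of_orbit hq hqpos (hfund x hx).1 hy1 hy2 (hfund x hx).2.1 (hfund x hx).2.2 h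
  have horb : ∀ x, 0 ≤ ratVal v x → ratVal v x < ratVal v q → x ≠ 0 → ∀ i,
      orbVec q (D.zeros q z w) (D.poles q z w) x i = ∑ e, D.out e i * if x = z e then 1 else 0 := by
    intro x hx1 hx2 hx0 i
    rw [D.orbVec_eq q z w hq]
    refine Finset.sum_congr rfl fun e _ => ?_
    have : (∃ j : ℤ, z e = q ^ j * x) ↔ x = z e := by
      constructor
      · rintro ⟨j, hj⟩
        exact (eq_of_orbit hq hqpos hx0 (hz1 e) (hz2 e) hx1 hx2 hj).symm
      · rintro rfl; exact ⟨0, by simp⟩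
    simp only [this]
  refine ⟨q, θ, z, w, B ∪ Finset.univ.image z, hq, hqpos, hθ, hz, hw0, hC.prod_leaf, ?_,
    fun x hx => (hfund x hx).1, fun x hx y hy hxy j h => ?_, hcov, hC.leaf_injective,
    fun e => by simp, fun e => funext fun i => ?_, fun x hx hxz => funext fun i => ?_⟩
  · apply Set.Subset.antisymm
    · rintro _ ⟨u, hu, rfl⟩
      obtain ⟨j, hj1, hj2⟩ := exists_zpow_mul hq hqpos hu.1
      have hu' := hu.zpow_mul hq j
      -- As `out e ≠ 0`, every `z e` is a zero or a pole of some coordinate, which `u` avoids.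
      have huz : ∀ e (l : ℤ), q ^ j * u ≠ q ^ l * z e := by
        intro e l h
        obtain ⟨i, hi⟩ := Function.ne_iff.mp (hout e)
        rcases D.leaf_mem q z w hi with hm | hm
        · exact (hu'.2 l i).1 _ hm h
        · exact (hu'.2 l i).2 _ hm h
      refine ⟨D.value v z (q ^ j * u), hC.value_mem hu'.1 hj1 (hqv ▸ hj2)
        (fun e => by simpa using huz e 0), funext fun i => ?_⟩
      dsimp only
      rw [← phiVal_zpow hq hper hu j i,
        D.val_phi hq hz hz1 hz2 hC.prod_leaf hw0 hw hθ hu' huz hj1 hj2]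
    · rintro _ ⟨p, hp, rfl⟩
      obtain ⟨u, huB, hu0, hu1, hu2, huz, hval⟩ := hC.exists_of_mem_image hsurj B hp
      rw [← hqv] at hu2
      have huz' : ∀ e (j : ℤ), u ≠ q ^ j * z e := fun e j h =>
        huz e (huniq (z e) (by simp) u hu1 hu2 j h)
      have hmem : ∀ x ∈ B ∪ Finset.univ.image z, u ≠ x := by
        rintro x hx rfl
        rcases Finset.mem_union.mp hx with hx | hx
        · exact huB hx
        · obtain ⟨e, -, he⟩ := Finset.mem_image.mp hx
          exact huz e he.symm
      have hdom : ∀ i y, (y ∈ D.zeros q z w i ∨ y ∈ D.poles q z w i) → ∀ j : ℤ, u ≠ q ^ j * y := by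
        intro i y hy j h
        obtain ⟨x, hx, l, rfl⟩ := hcov i y hy
        rw [← mul_assoc, ← zpow_add₀ hq] at h
        exact hmem x hx (huniq x hx u hu1 hu2 _ h)
      have hu : TateDom q (D.zeros q z w) (D.poles q z w) u := ⟨hu0, fun j i =>
        ⟨fun y hy => hdom i y (Or.inl hy) j, fun y hy => hdom i y (Or.inr hy) j⟩⟩
      refine ⟨u, hu, funext fun i => ?_⟩
      dsimp only
      rw [D.val_phi hq hz hz1 hz2 hC.prod_leaf hw0 hw hθ hu huz' hu1 hu2, ← hval]
  · exact hxy (huniq y hy x (hfund x hx).2.1 (hfund x hx).2.2 j h)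
  · rw [horb _ (hz1 e) (hz2 e) (hz e), Finset.sum_eq_single e]
    · simp
    · intro f _ hf
      rw [if_neg (fun h => hf (hC.leaf_injective h).symm), mul_zero]
    · simp
  · rw [horb x (hfund x hx).2.1 (hfund x hx).2.2 (hfund x hx).1]
    exact Finset.sum_eq_zero fun e _ => by rw [if_neg (hxz e), mul_zero]

end Unicyclic

/-- Primitive vectors which are positively proportional are equal. -/
lemma primitive_unique {n : ℕ} {ρ ρ' : Fin n → ℤ} (h : IsPrimitiveVec ρ) (h' : IsPrimitiveVec ρ')
    {m d : ℤ} (hm : 0 < m) (hd : 0 < d) (e : m • ρ = d • ρ') : ρ = ρ' := by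
  have hg : 0 < Int.gcd m d := Int.gcd_pos_of_ne_zero_left _ hm.ne'
  obtain ⟨m', d', hcop, hm', hd'⟩ := Int.exists_gcd_one hg
  have hg' : (0 : ℤ) < Int.gcd m d := by exact_mod_cast hg
  have e' : ∀ i, m' * ρ i = d' * ρ' i := by
    intro i
    have := congrFun e i
    simp only [Pi.smul_apply, smul_eq_mul] at this
    apply mul_right_cancel₀ hg'.ne'
    linear_combination this - ρ i * hm' + ρ' i * hd'
  have hm1 : 0 < m' := by rw [hm'] at hm; exact pos_of_mul_pos_left hm hg'.le
  have hd1 : 0 < d' := by rw [hd'] at hd; exact pos_of_mul_pos_left hd hg'.le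
  have hc : IsCoprime m' d' := Int.isCoprime_iff_gcd_eq_one.mpr hcop
  have u1 := h'.2 m' fun i => hc.dvd_of_dvd_mul_left ⟨ρ i, (e' i).symm⟩
  have u2 := h.2 d' fun i => hc.symm.dvd_of_dvd_mul_left ⟨ρ' i, e' i⟩
  have hm2 : m' = 1 := by rcases Int.isUnit_iff.mp u1 with h | h <;> omega
  have hd2 : d' = 1 := by rcases Int.isUnit_iff.mp u2 with h | h <;> omega
  funext i
  simpa [hm2, hd2] using e' i

/-- Let `K` be an algebraically closed field, complete with respect to a
surjective valuation `v : K^* → ℚ`.  Let `(ι, Γ, m)` be a zero tension curve in `ℚ^n` of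
genus one whose circuit edge slopes span `ℚ^n`.  Then there are `q ∈ K^*` with `v q > 0`
and finite multisets `Z_i^± ⊆ K^*` with `|Z_i^+| = |Z_i^-|` and
`∏_{z ∈ Z_i^+} z = ∏_{z ∈ Z_i^-} z`, such that, with `Θ` the Tate theta function of `q`
(characterized below by the convergence of its defining products) and
`φ_i = ∏_{z ∈ Z_i^+} Θ_z / ∏_{z ∈ Z_i^-} Θ_z`: each `φ_i` is `q^ℤ`-periodic on its
domain, the set of valuation vectors of `φ` on its domain is exactly `ι(Γ ∖ ∂Γ)`, and
the order vectors of `φ` at the `q^ℤ`-orbits of the points of the `Z_i^±`, grouped by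
primitive direction, recover the degree of `(ι, Γ, m)`. -/
theorem genus_one_ordinary_tropical_lifting
    {K : Type*} [Field K] [IsAlgClosed K] (v : K → WithTop ℚ)
    (hv0 : ∀ x : K, v x = ⊤ ↔ x = 0)
    (hvmul : ∀ x y : K, v (x * y) = v x + v y)
    (hvadd : ∀ x y : K, min (v x) (v y) ≤ v (x + y))
    (hsurj : ∀ a : ℚ, ∃ x : K, v x = (a : WithTop ℚ))
    (hcomplete : ∀ x : ℕ → K,
      (∀ M : ℚ, ∃ N : ℕ, ∀ m₁ ≥ N, ∀ m₂ ≥ N, (M : WithTop ℚ) ≤ v (x m₁ - x m₂)) →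
      ∃ L : K, VTendsto v x L)
    {n : ℕ} (C : ZTC n) (hval : C.Valid) (hconn : C.Connected)
    (hV : 0 < C.V) (hgenus : C.V = C.EB)
    (hordinary : ∃ (r : ℕ) (c : ZMod r → Fin C.V) (ce : ZMod r → Fin C.EB),
      C.IsCircuit r c ce ∧
      Submodule.span ℚ
        {x : Fin n → ℚ | ∃ k : ZMod r, x = fun i => (C.bdir (ce k) i : ℚ)} = ⊤) :
    ∃ (q : K) (Zp Zm : Fin n → Multiset K) (Θ : K → K → K),
      q ≠ 0 ∧ 0 < v q ∧
      (∀ i, ∀ z ∈ Zp i, z ≠ (0 : K)) ∧ (∀ i, ∀ z ∈ Zm i, z ≠ (0 : K)) ∧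
      (∀ i, Multiset.card (Zp i) = Multiset.card (Zm i)) ∧
      (∀ i, (Zp i).prod = (Zm i).prod) ∧
      (∀ z u : K, z ≠ 0 → u ≠ 0 → (∀ j : ℤ, u ≠ q ^ j * z) →
        Θ z u ≠ 0 ∧
        VTendsto v
          (fun m => (∏ j ∈ Finset.range m, (1 - q ^ j * u / z)) *
            ∏ j ∈ Finset.range m, (1 - q ^ (j + 1) * z / u))
          (Θ z u)) ∧
      (∀ u : K, TateDom q Zp Zm u →
        ∀ i, phiVal Θ (Zp i) (Zm i) (q * u) = phiVal Θ (Zp i) (Zm i) u) ∧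
      ((fun u : K => fun i => v (phiVal Θ (Zp i) (Zm i) u)) '' {u : K | TateDom q Zp Zm u}
        = (fun p : Fin n → ℚ => fun i => ((p i : ℚ) : WithTop ℚ)) '' C.ImageSet) ∧
      (∃ reps : Finset K,
        (∀ x ∈ reps, x ≠ (0 : K)) ∧
        (∀ x ∈ reps, ∀ y ∈ reps, x ≠ y → ∀ j : ℤ, x ≠ q ^ j * y) ∧
        (∀ i, ∀ z : K, (z ∈ Zp i ∨ z ∈ Zm i) → ∃ x ∈ reps, ∃ j : ℤ, z = q ^ j * x) ∧
        (∀ ρ : Fin n → ℤ, IsPrimitiveVec ρ →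
          (∑ x ∈ reps.filter (fun x => ∃ d : ℤ, 0 < d ∧ orbVec q Zp Zm x = d • ρ),
              orbVec q Zp Zm x)
            = (∑ e ∈ Finset.univ.filter (fun e : Fin C.ER => C.rdir e = ρ),
                (C.mR e : ℤ)) • ρ)) := by
  obtain ⟨D, hDout, hDimg⟩ := ZTC.exists_unicyclic C hval hconn hgenus hordinary
  have hv1 : v 1 = 0 := by
    have h1 : v (1 : K) ≠ ⊤ := fun h => one_ne_zero ((hv0 1).mp h)
    have h2 := hvmul 1 1
    rw [mul_one] at h2
    lift v 1 to ℚ using h1 with a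
    have h3 : a = a + a := by exact_mod_cast h2
    have h4 : a = 0 := by linarith
    rw [h4]; rfl
  let v' : AddValuation K (WithTop ℚ) := AddValuation.of v ((hv0 0).mpr rfl) hv1 hvadd hvmul
  have hvv' : (v' : K → WithTop ℚ) = v := rfl
  have houtvec : ∀ e, D.out e = (C.mR e : ℤ) • C.rdir e := fun e => funext fun i => by
    simp [hDout]
  have hmpos : ∀ e, (0 : ℤ) < C.mR e := fun e => by exact_mod_cast hval.2.1 e
  have hout0 : ∀ e, D.out e ≠ 0 := fun e => by
    rw [houtvec]; exact smul_ne_zero (hmpos e).ne' (hval.2.2.1 e).1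
  obtain ⟨q, θ, z, w, reps, hq, hqpos, hθ, hz, hw0, hprod, himg, hr0, hr1, hr2, hzinj, hzr, ho1,
    ho2⟩ := D.exists_lift v' hout0 hsurj hcomplete
  have hne : ∀ i x, x ∈ D.zeros q z w i ∨ x ∈ D.poles q z w i → x ≠ 0 := by
    intro i x hx
    rcases D.mem_cases q z w i hx with ⟨e, rfl⟩ | rfl | rfl | rfl | rfl
    exacts [hz e, hq, one_ne_zero, hw0 i, mul_ne_zero hq (hw0 i)]
  refine ⟨q, D.zeros q z w, D.poles q z w, thetaAt θ, hq, ?_, fun i x hx => hne i x (Or.inl hx),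
    fun i x hx => hne i x (Or.inr hx), D.card_zeros q z w, D.prod_zeros q z w hq hz hprod, ?_, ?_, ?_,
    reps, hr0, hr1, hr2, ?_⟩
  · rw [← hvv', ← coe_ratVal v' hq]; exact_mod_cast hqpos
  · intro y u hy hu h
    refine ⟨hθ.ne_zero hu hy h, ?_⟩
    have := (hθ _ (div_ne_zero hu hy) (orbit_quot hy h)).2.1
    have e : (fun m => (∏ j ∈ Finset.range m, (1 - q ^ j * u / y)) *
        ∏ j ∈ Finset.range m, (1 - q ^ (j + 1) * y / u)) = thetaPart q (u / y) := by
      funext m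
      simp only [thetaPart, inv_div, mul_div_assoc]
    rw [e]
    exact this
  · exact fun u hu i =>
      phiVal_shift hθ hu.1 _ _ (fun x hx => hne i x (Or.inl hx)) (fun j => (hu.2 j i).1)
        (fun x hx => hne i x (Or.inr hx)) (fun j => (hu.2 j i).2) (D.card_zeros q z w i)
        (D.prod_zeros q z w hq hz hprod i)
  · rw [← hDimg]; exact himg
  · intro ρ hρ
    have hcond : ∀ e, (∃ d : ℤ, 0 < d ∧ D.out e = d • ρ) ↔ C.rdir e = ρ := by
      intro e
      constructor
      · rintro ⟨d, hd, h⟩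
        exact primitive_unique (hval.2.2.1 e) hρ (hmpos e) hd ((houtvec e).symm.trans h)
      · rintro rfl; exact ⟨_, hmpos e, houtvec e⟩
    have hsub : Finset.univ.image z ⊆ reps := by
      intro x hx
      obtain ⟨e, -, rfl⟩ := Finset.mem_image.mp hx
      exact hzr e
    rw [Finset.sum_filter, ← Finset.sum_subset hsub, Finset.sum_image hzinj.injOn, Finset.sum_smul,
      Finset.sum_filter]
    · refine Finset.sum_congr rfl fun e _ => ?_
      simp only [ho1, hcond]
      by_cases h : C.rdir e = ρ
      · rw [if_pos h, if_pos h, houtvec, h]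
      · rw [if_neg h, if_neg h]
    · intro x hx hxz
      rw [ho2 x hx fun e he => hxz (Finset.mem_image.mpr ⟨e, Finset.mem_univ _, he.symm⟩), ite_self]
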